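/- arXiv:1607.00550 — 3 statements merged into one kernel-verified Lean document; each statement's English description precedes it below -/
import Mathlib

section
/- Suppose W is uniformly distributed on [0,1] and, given W = w, the samples X_1,…,X_n are i.i.d. Bernoulli(w). Let R_B(n) = inf_ψ E|W − ψ(X^n)| be the Bayes risk with respect to the absolute distortion ℓ(w,ŵ) = |w − ŵ|. Then liminf_{n→∞} 16 √(2πn) · R_B(n) ≥ 1; that is, R_B(n) is asymptotically at least 1/(16 √(2πn)). -/
open MeasureTheory ProbabilityTheory Real

attribute [local instance] Classical.propDecidable
open scoped ENNReal NNReal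

noncomputable section
namespace DecEst

variable {Ω α β γ : Type*}


/-- Bayes risk: infimum of the expected distortion over all measurable estimators. -/
def bayesRisk [MeasurableSpace Ω] [MeasurableSpace α] [MeasurableSpace β]
    (μ : Measure Ω) (W : Ω → α) (X : Ω → β) (ℓ : α → α → ℝ) : ℝ :=
  ⨅ ψ : {ψ : β → α // Measurable ψ}, ∫ ω, ℓ (W ω) (ψ.1 (X ω)) ∂μ

/-- Bernoulli distribution on `Bool`. -/
def bern (p : ℝ) : Measure Bool :=
  (ENNReal.ofReal p) • Measure.dirac true + (ENNReal.ofReal (1 - p)) • Measure.dirac false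


/-- The Bayes risk `R_B(n)` for estimating, under absolute distortion, a parameter `W`
uniformly distributed on `[0,1]` from `n` samples that are i.i.d. `Bernoulli(w)` given
`W = w` (infimum over all realizations of this joint distribution; they all share the
same Bayes risk). -/
def bernoulliBiasBayesRisk (n : ℕ) : ℝ :=
  sInf {r : ℝ |
    ∃ (Ω : Type) (_ : MeasurableSpace Ω) (μ : Measure Ω) (_ : IsProbabilityMeasure μ)
      (W : Ω → ℝ) (X : Ω → Fin n → Bool),
      Measurable W ∧ Measurable X ∧
      μ.map W = volume.restrict (Set.Icc (0 : ℝ) 1) ∧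
      (∀ᵐ w ∂(μ.map W), condDistrib X W μ w = Measure.pi fun _ : Fin n => bern w) ∧
      r = bayesRisk μ W X fun w w' => |w - w'|}

/-!
All realizations of `(W, X)` have the same Bayes risk: the infimum over `ψ` of the conditional risk
`E_w |w - ψ(X)|` integrated over `w ∈ [0, 1]`. For the lower bound, pair `w ∈ [1/4, 3/4]` with
`w + δ`, where `δ = 1 / (3 √n)`. No estimator is close to both points, so by the triangle
inequality the two conditional risks add up to at least `δ ∑ₓ min (P_w x) (P_{w+δ} x)`. The
overlap is at least `1 - (1 + χ²) / 4`, and `1 + χ²` tensorizes to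
`(1 + δ² / (w (1 - w))) ^ n ≤ exp (16 / 27) ≤ 2`. Integrating over `w` gives
`R_B(n) ≥ δ / 8 = 1 / (24 √n)`, and `16 √(2π) / 24 > 1`. In `ℝ` the `liminf` of a sequence
tending to infinity is the junk value `0`, so an upper bound of order `1 / √n` is also needed; the
sample mean provides it.
-/

section TwoPoint

lemma sub_sq_div_le_min {p : ℝ} (hp : 0 < p) (q : ℝ) : q - q ^ 2 / p / 4 ≤ min p q := by
  have hsq : q ^ 2 / p / 4 - q + p = (q / 2 - p) ^ 2 / p := by
    field_simp
    ring
  have hsq_nonneg : 0 ≤ (q / 2 - p) ^ 2 / p := by positivity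
  have hq_nonneg : 0 ≤ q ^ 2 / p / 4 := by positivity
  exact le_min (by linarith) (by linarith)

lemma dist_mul_sum_min_le [Fintype β] [PseudoMetricSpace α] {p q : β → ℝ} (hp : ∀ x, 0 ≤ p x)
    (hq : ∀ x, 0 ≤ q x) (ψ : β → α) (a b : α) :
    dist a b * ∑ x, min (p x) (q x) ≤
      ∑ x, p x * dist a (ψ x) + ∑ x, q x * dist b (ψ x) := by
  rw [Finset.mul_sum, ← Finset.sum_add_distrib]
  refine Finset.sum_le_sum fun x _ => ?_
  have hmin : 0 ≤ min (p x) (q x) := le_min (hp x) (hq x)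
  calc dist a b * min (p x) (q x)
      ≤ (dist a (ψ x) + dist b (ψ x)) * min (p x) (q x) := by
        gcongr
        exact dist_triangle_right a b (ψ x)
    _ = min (p x) (q x) * dist a (ψ x) + min (p x) (q x) * dist b (ψ x) := by ring
    _ ≤ p x * dist a (ψ x) + q x * dist b (ψ x) := by
        gcongr
        · exact min_le_left _ _
        · exact min_le_right _ _

lemma dist_mul_sub_chiSq_le [Fintype β] [PseudoMetricSpace α] {p q : β → ℝ} (hp : ∀ x, 0 < p x)
    (hq : ∀ x, 0 ≤ q x) (ψ : β → α) (a b : α) :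
    dist a b * (∑ x, q x - (∑ x, q x ^ 2 / p x) / 4) ≤
      ∑ x, p x * dist a (ψ x) + ∑ x, q x * dist b (ψ x) := by
  refine le_trans ?_ (dist_mul_sum_min_le (fun x => (hp x).le) hq ψ a b)
  rw [Finset.sum_div, ← Finset.sum_sub_distrib]
  gcongr with x
  exact sub_sq_div_le_min (hp x) (q x)

end TwoPoint

lemma sub_mul_le_two_mul_integral_of_le_add_shift {f : ℝ → ℝ} {a b s t δ c : ℝ}
    (hf : IntervalIntegrable f volume a b) (hf_nonneg : ∀ w ∈ Set.Icc a b, 0 ≤ f w)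
    (has : a ≤ s) (hst : s ≤ t) (hδ : 0 ≤ δ) (htb : t + δ ≤ b)
    (hc : ∀ w ∈ Set.Icc s t, c ≤ f w + f (w + δ)) :
    (t - s) * c ≤ 2 * ∫ w in a..b, f w := by
  have integral_le {u v : ℝ} (hau : a ≤ u) (huv : u ≤ v) (hvb : v ≤ b) :
      ∫ w in u..v, f w ≤ ∫ w in a..b, f w :=
    intervalIntegral.integral_mono_interval hau huv hvb
      ((ae_restrict_mem measurableSet_Ioc).mono fun w hw => hf_nonneg w ⟨hw.1.le, hw.2⟩) hf
  have integrable {u v : ℝ} (hau : a ≤ u) (huv : u ≤ v) (hvb : v ≤ b) :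
      IntervalIntegrable f volume u v :=
    hf.mono_set (by
      rw [Set.uIcc_of_le huv, Set.uIcc_of_le (hau.trans (huv.trans hvb))]
      exact Set.Icc_subset_Icc hau hvb)
  have hint : IntervalIntegrable f volume s t := integrable has hst (by linarith)
  have hint_shift : IntervalIntegrable (fun w => f (w + δ)) volume s t := by
    simpa using (integrable (by linarith) (by linarith) htb :
      IntervalIntegrable f volume (s + δ) (t + δ)).comp_add_right δ
  calc (t - s) * c = ∫ _ in s..t, c := by simp
    _ ≤ ∫ w in s..t, f w + f (w + δ) :=
        intervalIntegral.integral_mono_on hst (by simp) (hint.add hint_shift) hc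
    _ = (∫ w in s..t, f w) + ∫ w in (s + δ)..(t + δ), f w := by
        rw [intervalIntegral.integral_add hint hint_shift,
          intervalIntegral.integral_comp_add_right]
    _ ≤ 2 * ∫ w in a..b, f w := by
        linarith [integral_le has hst (by linarith),
          integral_le (u := s + δ) (v := t + δ) (by linarith) (by linarith) htb]

lemma integral_abs_sub_integral_le_sqrt_variance [MeasurableSpace Ω] {μ : Measure Ω}
    [IsProbabilityMeasure μ] {Y : Ω → ℝ} (hY : MemLp Y 2 μ) :
    ∫ ω, |Y ω - μ[Y]| ∂μ ≤ √(Var[Y; μ]) := by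
  have hdev : MemLp (fun ω => |Y ω - μ[Y]|) 2 μ := (hY.sub (memLp_const _)).abs
  have hvar := variance_nonneg (fun ω => |Y ω - μ[Y]|) μ
  rw [variance_eq_sub hdev] at hvar
  refine Real.le_sqrt_of_sq_le ?_
  rw [variance_eq_integral hY.aemeasurable]
  simpa [sq_abs] using hvar

lemma measurable_measure_of_measurable_singleton [MeasurableSpace α] [MeasurableSpace β]
    [Countable β] [MeasurableSingletonClass β] {κ : α → Measure β}
    (hκ : ∀ x, Measurable fun a => κ a {x}) :
    Measurable κ := by
  refine Measure.measurable_of_measurable_coe _ fun s hs => ?_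
  simp_rw [← fun a => (κ a).tsum_indicator_apply_singleton s hs]
  refine Measurable.tsum fun x => ?_
  by_cases hx : x ∈ s <;> simp [hx, hκ x]

lemma sum_prod_eq_pow_card {ι R : Type*} [Fintype ι] [Fintype α] [CommSemiring R] (f : α → R) :
    ∑ x : ι → α, ∏ i, f (x i) = (∑ a, f a) ^ Fintype.card ι := by
  rw [← Fintype.piFinset_univ, Finset.sum_prod_piFinset]
  simp

section Bernoulli

variable {ι : Type*} [Fintype ι] {v w : ℝ}

instance isFiniteMeasure_bern (w : ℝ) : IsFiniteMeasure (bern w) := by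
  have := Measure.smul_finite (Measure.dirac true) (ENNReal.ofReal_ne_top (r := w))
  have := Measure.smul_finite (Measure.dirac false) (ENNReal.ofReal_ne_top (r := 1 - w))
  exact isFiniteMeasureAdd

lemma isProbabilityMeasure_bern (hw : w ∈ Set.Icc 0 1) : IsProbabilityMeasure (bern w) where
  measure_univ := by simp [bern, ← ENNReal.ofReal_add hw.1 (sub_nonneg.2 hw.2)]

lemma bern_real_true (w : ℝ) : (bern w).real {true} = max w 0 := by
  simp [bern, measureReal_def, ENNReal.ofReal]

lemma bern_real_false (w : ℝ) : (bern w).real {false} = max (1 - w) 0 := by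
  simp [bern, measureReal_def, ENNReal.ofReal]

lemma continuous_bern_real_singleton (b : Bool) : Continuous fun w => (bern w).real {b} := by
  cases b
  · simp only [bern_real_false]
    fun_prop
  · simp only [bern_real_true]
    fun_prop

lemma bern_real_singleton_pos (hw : w ∈ Set.Ioo 0 1) (b : Bool) : 0 < (bern w).real {b} := by
  cases b
  · simpa [bern_real_false] using hw.2
  · simpa [bern_real_true] using hw.1

lemma integral_toNat_bern (hw : w ∈ Set.Icc 0 1) : ∫ b, (b.toNat : ℝ) ∂bern w = w := by
  rw [integral_fintype .of_finite]
  simp [bern_real_true, hw.1]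

lemma sum_bern_real_sq_div (hv : v ∈ Set.Icc 0 1) (hw : w ∈ Set.Ioo 0 1) :
    ∑ b, (bern v).real {b} ^ 2 / (bern w).real {b} = 1 + (v - w) ^ 2 / (w * (1 - w)) := by
  have hw_ne : w ≠ 0 := hw.1.ne'
  have hw_ne' : 1 - w ≠ 0 := (sub_pos.2 hw.2).ne'
  rw [Fintype.sum_bool, bern_real_true, bern_real_true, bern_real_false, bern_real_false,
    max_eq_left hv.1, max_eq_left hw.1.le, max_eq_left (sub_nonneg.2 hv.2),
    max_eq_left (sub_nonneg.2 hw.2.le)]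
  field_simp
  ring

variable (ι) in
/-- The law of a family of i.i.d. `bern w` samples indexed by `ι`. -/
def bernPi (w : ℝ) : Measure (ι → Bool) := Measure.pi fun _ => bern w

instance isFiniteMeasure_bernPi (w : ℝ) : IsFiniteMeasure (bernPi ι w) := by
  unfold bernPi
  infer_instance

lemma isProbabilityMeasure_bernPi (hw : w ∈ Set.Icc 0 1) : IsProbabilityMeasure (bernPi ι w) := by
  have := isProbabilityMeasure_bern hw
  unfold bernPi
  infer_instance

lemma bernPi_real_singleton (w : ℝ) (x : ι → Bool) :
    (bernPi ι w).real {x} = ∏ i, (bern w).real {x i} := by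
  simp [bernPi, measureReal_def, ENNReal.toReal_prod]

lemma continuous_bernPi_real_singleton (x : ι → Bool) :
    Continuous fun w => (bernPi ι w).real {x} := by
  simp only [bernPi_real_singleton]
  exact continuous_finsetProd _ fun i _ => continuous_bern_real_singleton (x i)

lemma measurable_bernPi : Measurable (bernPi ι) :=
  measurable_measure_of_measurable_singleton fun x => by
    simpa using (continuous_bernPi_real_singleton x).measurable.ennreal_ofReal

lemma sum_bernPi_real_sq_div (hv : v ∈ Set.Icc 0 1) (hw : w ∈ Set.Ioo 0 1) :
    ∑ x, (bernPi ι v).real {x} ^ 2 / (bernPi ι w).real {x} =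
      (1 + (v - w) ^ 2 / (w * (1 - w))) ^ Fintype.card ι := by
  simp only [bernPi_real_singleton, ← Finset.prod_pow, ← Finset.prod_div_distrib]
  rw [sum_prod_eq_pow_card fun b => (bern v).real {b} ^ 2 / (bern w).real {b},
    sum_bern_real_sq_div hv hw]

/-- The conditional risk `E[|w - ψ(X)| | W = w]` of the estimator `ψ` under absolute distortion. -/
def condRisk (ψ : (ι → Bool) → ℝ) (w : ℝ) : ℝ := ∫ x, |w - ψ x| ∂bernPi ι w

lemma condRisk_nonneg (ψ : (ι → Bool) → ℝ) (w : ℝ) : 0 ≤ condRisk ψ w :=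
  integral_nonneg fun _ => abs_nonneg _

lemma condRisk_eq_sum (ψ : (ι → Bool) → ℝ) (w : ℝ) :
    condRisk ψ w = ∑ x, (bernPi ι w).real {x} * |w - ψ x| :=
  integral_fintype .of_finite

lemma continuous_condRisk (ψ : (ι → Bool) → ℝ) : Continuous (condRisk ψ) := by
  rw [funext (condRisk_eq_sum ψ)]
  exact continuous_finsetSum _ fun x _ => (continuous_bernPi_real_singleton x).mul (by fun_prop)

lemma abs_sub_mul_le_condRisk_add_condRisk (ψ : (ι → Bool) → ℝ) (hw : w ∈ Set.Ioo 0 1)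
    (hv : v ∈ Set.Icc 0 1) :
    |w - v| * (1 - (1 + (v - w) ^ 2 / (w * (1 - w))) ^ Fintype.card ι / 4) ≤
      condRisk ψ w + condRisk ψ v := by
  have := isProbabilityMeasure_bernPi (ι := ι) hv
  have hpos (x : ι → Bool) : 0 < (bernPi ι w).real {x} := by
    rw [bernPi_real_singleton]
    exact Finset.prod_pos fun i _ => bern_real_singleton_pos hw (x i)
  have htotal : ∑ x, (bernPi ι v).real {x} = 1 := by
    rw [sum_measureReal_singleton, Finset.coe_univ, probReal_univ]
  have htwoPoint := dist_mul_sub_chiSq_le hpos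
    (fun x => (measureReal_nonneg : 0 ≤ (bernPi ι v).real {x})) ψ w v
  simpa only [htotal, sum_bernPi_real_sq_div hv hw, Real.dist_eq, ← condRisk_eq_sum]
    using htwoPoint

end Bernoulli

section LowerBound

lemma one_add_sq_div_pow_le_two {n : ℕ} {w δ : ℝ} (hδ : 9 * n * δ ^ 2 ≤ 1)
    (hw : w ∈ Set.Icc (1 / 4) (3 / 4)) : (1 + δ ^ 2 / (w * (1 - w))) ^ n ≤ 2 := by
  have hvar : 3 / 16 ≤ w * (1 - w) := by nlinarith [hw.1, hw.2]
  have hexponent : n * (δ ^ 2 / (w * (1 - w))) ≤ 16 / 27 := by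
    rw [← mul_div_assoc, div_le_iff₀ (by linarith)]
    linarith
  calc (1 + δ ^ 2 / (w * (1 - w))) ^ n
      ≤ exp (δ ^ 2 / (w * (1 - w))) ^ n := by
        gcongr
        linarith [add_one_le_exp (δ ^ 2 / (w * (1 - w)))]
    _ = exp (n * (δ ^ 2 / (w * (1 - w)))) := (exp_nat_mul _ n).symm
    _ ≤ exp (log 2) := exp_le_exp.2 (by linarith [log_two_gt_d9])
    _ = 2 := exp_log two_pos

variable {ι : Type*} [Fintype ι]

lemma div_two_le_condRisk_add_condRisk_shift (ψ : (ι → Bool) → ℝ) {w δ : ℝ} (hδ_nonneg : 0 ≤ δ)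
    (hδ_le : δ ≤ 1 / 4) (hδ_sq : 9 * Fintype.card ι * δ ^ 2 ≤ 1)
    (hw : w ∈ Set.Icc (1 / 4) (3 / 4)) :
    δ / 2 ≤ condRisk ψ w + condRisk ψ (w + δ) := by
  have hrisk := abs_sub_mul_le_condRisk_add_condRisk (w := w) (v := w + δ) ψ
    ⟨by linarith [hw.1], by linarith [hw.2]⟩ ⟨by linarith [hw.1], by linarith [hw.2]⟩
  rw [sub_add_cancel_left, abs_neg, abs_of_nonneg hδ_nonneg, add_sub_cancel_left] at hrisk
  have hchiSq := one_add_sq_div_pow_le_two hδ_sq hw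
  calc δ / 2 = δ * (1 - 2 / 4) := by ring
    _ ≤ δ * (1 - (1 + δ ^ 2 / (w * (1 - w))) ^ Fintype.card ι / 4) := by gcongr
    _ ≤ condRisk ψ w + condRisk ψ (w + δ) := hrisk

lemma one_div_mul_sqrt_card_le_integral_condRisk (ψ : (ι → Bool) → ℝ) (hι : 2 ≤ Fintype.card ι) :
    1 / (24 * √(Fintype.card ι)) ≤ ∫ w in Set.Icc 0 1, condRisk ψ w := by
  have hcard : (2 : ℝ) ≤ Fintype.card ι := by exact_mod_cast hι
  have hsqrt : 4 / 3 ≤ √(Fintype.card ι) := Real.le_sqrt_of_sq_le (by linarith)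
  set δ : ℝ := 1 / (3 * √(Fintype.card ι)) with hδ
  have hδ_nonneg : 0 ≤ δ := by positivity
  have hδ_le : δ ≤ 1 / 4 := one_div_le_one_div_of_le (by norm_num) (by linarith)
  have hδ_sq : 9 * Fintype.card ι * δ ^ 2 ≤ 1 := by
    rw [hδ, div_pow, mul_pow, sq_sqrt (by linarith)]
    field_simp
    norm_num
  have hintegral := sub_mul_le_two_mul_integral_of_le_add_shift (a := 0) (b := 1)
    ((continuous_condRisk ψ).intervalIntegrable _ _) (fun w _ => condRisk_nonneg ψ w)
    (by norm_num) (by norm_num) hδ_nonneg (by linarith)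
    (fun w => div_two_le_condRisk_add_condRisk_shift ψ hδ_nonneg hδ_le hδ_sq)
  rw [integral_Icc_eq_integral_Ioc, ← intervalIntegral.integral_of_le zero_le_one]
  calc 1 / (24 * √(Fintype.card ι)) = δ / 8 := by
        rw [hδ]
        field_simp
        norm_num
    _ ≤ ∫ w in (0 : ℝ)..1, condRisk ψ w := by linarith

end LowerBound

section UpperBound

variable {ι : Type*} [Fintype ι] {w : ℝ}

/-- The fraction of successes among the samples (`0` if `ι` is empty), an estimator of the bias. -/
def sampleMean (x : ι → Bool) : ℝ := (∑ i, ((x i).toNat : ℝ)) / Fintype.card ι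

lemma integral_sampleMean_bernPi [Nonempty ι] (hw : w ∈ Set.Icc 0 1) :
    ∫ x, sampleMean x ∂bernPi ι w = w := by
  have := isProbabilityMeasure_bern hw
  have hcoord (i : ι) : ∫ x, ((x i).toNat : ℝ) ∂bernPi ι w = w :=
    (integral_comp_eval (μ := fun _ : ι => bern w) (f := fun b : Bool => (b.toNat : ℝ))
      (measurable_of_finite _).aestronglyMeasurable).trans (integral_toNat_bern hw)
  simp only [sampleMean]
  rw [integral_div, integral_finsetSum _ fun i _ => .of_finite]
  simp [hcoord]

lemma variance_sampleMean_bernPi_le [Nonempty ι] (hw : w ∈ Set.Icc 0 1) :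
    Var[sampleMean; bernPi ι w] ≤ 1 / (4 * Fintype.card ι) := by
  have := isProbabilityMeasure_bern hw
  have hcoord : Var[fun b : Bool => (b.toNat : ℝ); bern w] ≤ 1 / 4 := by
    refine (variance_le_sq_of_bounded (a := 0) (b := 1) (.of_forall ?_)
      (measurable_of_finite _).aemeasurable).trans_eq (by norm_num)
    rintro (_ | _) <;> simp
  have hsum : Var[fun x : ι → Bool => ∑ i, ((x i).toNat : ℝ); bernPi ι w] =
      Fintype.card ι * Var[fun b : Bool => (b.toNat : ℝ); bern w] := by
    have hpi := variance_sum_pi (μ := fun _ : ι => bern w)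
      (X := fun _ b => (b.toNat : ℝ)) fun _ => .of_discrete
    rw [Finset.sum_fn] at hpi
    simpa [bernPi] using hpi
  calc Var[sampleMean; bernPi ι w]
      = Fintype.card ι * Var[fun b : Bool => (b.toNat : ℝ); bern w] *
          (Fintype.card ι : ℝ)⁻¹ ^ 2 := by
        rw [← hsum, ← variance_mul_const]
        rfl
    _ ≤ Fintype.card ι * (1 / 4) * (Fintype.card ι : ℝ)⁻¹ ^ 2 := by gcongr
    _ = 1 / (4 * Fintype.card ι) := by field_simp

lemma condRisk_sampleMean_le [Nonempty ι] (hw : w ∈ Set.Icc 0 1) :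
    condRisk (sampleMean (ι := ι)) w ≤ 1 / (2 * √(Fintype.card ι)) := by
  have := isProbabilityMeasure_bernPi (ι := ι) hw
  have hdev := integral_abs_sub_integral_le_sqrt_variance (μ := bernPi ι w)
    (Y := sampleMean) .of_discrete
  rw [integral_sampleMean_bernPi hw] at hdev
  calc condRisk sampleMean w = ∫ x, |sampleMean x - w| ∂bernPi ι w := by
        simp only [condRisk, abs_sub_comm]
    _ ≤ √(1 / (4 * Fintype.card ι)) :=
        hdev.trans (Real.sqrt_le_sqrt (variance_sampleMean_bernPi_le hw))
    _ = 1 / (2 * √(Fintype.card ι)) := by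
        rw [Real.sqrt_div zero_le_one, Real.sqrt_one, Real.sqrt_mul (by norm_num),
          show √(4 : ℝ) = 2 by rw [Real.sqrt_eq_iff_mul_self_eq] <;> norm_num]

lemma integral_condRisk_sampleMean_le [Nonempty ι] :
    ∫ w in Set.Icc 0 1, condRisk (sampleMean (ι := ι)) w ≤ 1 / (2 * √(Fintype.card ι)) := by
  have := setIntegral_mono_on (μ := volume) (continuous_condRisk _).integrableOn_Icc
    continuous_const.integrableOn_Icc measurableSet_Icc
    fun w (hw : w ∈ Set.Icc 0 1) => condRisk_sampleMean_le (ι := ι) hw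
  simpa using this

end UpperBound

section Model

variable {ι : Type*} [Fintype ι]

/-- `W` has law `ν` and, given `W = w`, the samples `X` are i.i.d. `bern w`: the realizations
over which `bernoulliBiasBayesRisk` ranges, for an arbitrary prior `ν`. -/
structure IsBernoulliModel [MeasurableSpace Ω] (ν : Measure ℝ) (μ : Measure Ω) [IsFiniteMeasure μ]
    (W : Ω → ℝ) (X : Ω → ι → Bool) : Prop where
  measurable_param : Measurable W
  measurable_samples : Measurable X
  map_param : μ.map W = ν
  condDistrib_samples : ∀ᵐ w ∂μ.map W, condDistrib X W μ w = bernPi ι w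

lemma integral_comp_prodMk_eq_integral_condDistrib {E : Type*} [NormedAddCommGroup E]
    [NormedSpace ℝ E] [MeasurableSpace Ω] [MeasurableSpace α] [MeasurableSpace β]
    [StandardBorelSpace β] [Nonempty β] {μ : Measure Ω} [IsFiniteMeasure μ] {W : Ω → α}
    {X : Ω → β} {f : α × β → E} (hW : AEMeasurable W μ) (hX : AEMeasurable X μ)
    (hf : StronglyMeasurable f) (hint : Integrable (fun ω => f (W ω, X ω)) μ) :
    ∫ ω, f (W ω, X ω) ∂μ = ∫ w, ∫ x, f (w, x) ∂condDistrib X W μ w ∂μ.map W := by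
  have hWX : AEMeasurable (fun ω => (W ω, X ω)) μ := hW.prodMk hX
  have hlaw : μ.map W ⊗ₘ condDistrib X W μ = μ.map fun ω => (W ω, X ω) :=
    compProd_map_condDistrib hX
  have hint_law : Integrable f (μ.map W ⊗ₘ condDistrib X W μ) := by
    rw [hlaw]
    exact (integrable_map_measure hf.aestronglyMeasurable hWX).2 hint
  rw [← Measure.integral_compProd hint_law, hlaw, integral_map hWX hf.aestronglyMeasurable]

lemma IsBernoulliModel.integral_abs_sub [MeasurableSpace Ω] {ν : Measure ℝ} {μ : Measure Ω}
    [IsFiniteMeasure μ] {W : Ω → ℝ} {X : Ω → ι → Bool} (h : IsBernoulliModel ν μ W X)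
    (hν : Integrable id ν) (ψ : (ι → Bool) → ℝ) :
    ∫ ω, |W ω - ψ (X ω)| ∂μ = ∫ w, condRisk ψ w ∂ν := by
  have hW : Integrable W μ := by
    rw [← h.map_param] at hν
    exact hν.comp_measurable h.measurable_param
  have hX : Integrable (fun ω => ψ (X ω)) μ :=
    (Integrable.of_finite : Integrable ψ (μ.map X)).comp_measurable h.measurable_samples
  have hmeas : Measurable fun p : ℝ × (ι → Bool) => |p.1 - ψ p.2| := by
    have := measurable_of_finite ψ
    fun_prop
  rw [integral_comp_prodMk_eq_integral_condDistrib (f := fun p => |p.1 - ψ p.2|)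
    h.measurable_param.aemeasurable h.measurable_samples.aemeasurable hmeas.stronglyMeasurable
    (hW.sub hX).abs, ← h.map_param]
  refine integral_congr_ae ?_
  filter_upwards [h.condDistrib_samples] with w hw
  rw [hw, condRisk]

lemma IsBernoulliModel.bayesRisk_eq_iInf [MeasurableSpace Ω] {ν : Measure ℝ} {μ : Measure Ω}
    [IsFiniteMeasure μ] {W : Ω → ℝ} {X : Ω → ι → Bool} (h : IsBernoulliModel ν μ W X)
    (hν : Integrable id ν) :
    bayesRisk μ W X (fun w w' => |w - w'|) =
      ⨅ ψ : (ι → Bool) → ℝ, ∫ w, condRisk ψ w ∂ν :=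
  (Equiv.subtypeUnivEquiv measurable_of_finite).iInf_congr fun ψ =>
    (h.integral_abs_sub hν ψ.1).symm

variable (ι) in
/-- The sampling kernel `w ↦ bernPi ι w`, with `w` projected onto `[0, 1]` so that the kernel is
Markov on all of `ℝ`. -/
def bernKernel : Kernel ℝ (ι → Bool) where
  toFun w := bernPi ι (Set.projIcc 0 1 zero_le_one w)
  measurable' := measurable_bernPi.comp
    (measurable_subtype_coe.comp (continuous_projIcc (h := zero_le_one)).measurable)

instance isMarkovKernel_bernKernel : IsMarkovKernel (bernKernel ι) :=
  ⟨fun w => isProbabilityMeasure_bernPi (Set.projIcc 0 1 zero_le_one w).2⟩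

lemma isBernoulliModel_compProd_bernKernel {ν : Measure ℝ} [IsFiniteMeasure ν]
    (hν : ∀ᵐ w ∂ν, w ∈ Set.Icc 0 1) :
    IsBernoulliModel ν (ν ⊗ₘ bernKernel ι) Prod.fst Prod.snd := by
  have hfst : (ν ⊗ₘ bernKernel ι).map Prod.fst = ν := Measure.fst_compProd _ _
  refine ⟨measurable_fst, measurable_snd, hfst, ?_⟩
  have hcond := condDistrib_ae_eq_of_measure_eq_compProd (μ := ν ⊗ₘ bernKernel ι) Prod.fst
    measurable_snd.aemeasurable (κ := bernKernel ι) (by rw [hfst]; exact Measure.map_id)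
  rw [hfst] at hcond ⊢
  filter_upwards [hcond, hν] with w hw hw_mem
  rw [hw]
  exact congrArg (fun u : Set.Icc (0 : ℝ) 1 => bernPi ι u) (Set.projIcc_of_mem zero_le_one hw_mem)

end Model

lemma bernoulliBiasBayesRisk_eq_iInf (n : ℕ) :
    bernoulliBiasBayesRisk n =
      ⨅ ψ : (Fin n → Bool) → ℝ, ∫ w in Set.Icc 0 1, condRisk ψ w := by
  have huniform : IsProbabilityMeasure (volume.restrict (Set.Icc (0 : ℝ) 1)) := ⟨by simp⟩
  have hint : Integrable id (volume.restrict (Set.Icc (0 : ℝ) 1)) :=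
    continuous_id.integrableOn_Icc
  refine (congrArg sInf (Set.eq_singleton_iff_unique_mem.2 ⟨?_, ?_⟩)).trans (csInf_singleton _)
  · have h := isBernoulliModel_compProd_bernKernel (ι := Fin n)
      (ae_restrict_mem (μ := volume) measurableSet_Icc)
    exact ⟨_, _, _, inferInstance, _, _, h.measurable_param, h.measurable_samples, h.map_param,
      h.condDistrib_samples, (h.bayesRisk_eq_iInf hint).symm⟩
  · rintro r ⟨Ω, _, μ, _, W, X, hW, hX, hmap, hcond, rfl⟩
    exact IsBernoulliModel.bayesRisk_eq_iInf ⟨hW, hX, hmap, hcond⟩ hint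

lemma one_div_mul_sqrt_le_bernoulliBiasBayesRisk {n : ℕ} (hn : 2 ≤ n) :
    1 / (24 * √n) ≤ bernoulliBiasBayesRisk n := by
  rw [bernoulliBiasBayesRisk_eq_iInf]
  refine le_ciInf fun ψ => ?_
  simpa using one_div_mul_sqrt_card_le_integral_condRisk ψ (by simpa using hn)

lemma bernoulliBiasBayesRisk_le_one_div_mul_sqrt {n : ℕ} (hn : n ≠ 0) :
    bernoulliBiasBayesRisk n ≤ 1 / (2 * √n) := by
  have : NeZero n := ⟨hn⟩
  rw [bernoulliBiasBayesRisk_eq_iInf]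
  refine ciInf_le_of_le ⟨0, ?_⟩ sampleMean
    (by simpa using integral_condRisk_sampleMean_le (ι := Fin n))
  rintro _ ⟨ψ, rfl⟩
  exact integral_nonneg (condRisk_nonneg ψ)

/-- Corollary 2. Estimating a Bernoulli bias with a uniform prior:
the Bayes risk satisfies `R_B(n) ≳ 1/(16 √(2 π n))` as `n → ∞`, i.e.
`liminf_{n→∞} 16 √(2 π n) R_B(n) ≥ 1`. -/
theorem bayes_risk_bernoulli_bias_uniform_prior :
    1 ≤ Filter.liminf
      (fun n : ℕ => 16 * Real.sqrt (2 * π * n) * bernoulliBiasBayesRisk n)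
      Filter.atTop := by
  have hsqrt_mul (n : ℕ) : √(2 * π * n) = √(2 * π) * √n := Real.sqrt_mul (by positivity) _
  have hsqrt_two_pi : 3 / 2 ≤ √(2 * π) := Real.le_sqrt_of_sq_le (by linarith [pi_gt_three])
  refine Filter.le_liminf_of_le ?_ ?_
  · refine (Filter.isBoundedUnder_of_eventually_le (a := 8 * √(2 * π)) ?_).isCoboundedUnder_ge
    filter_upwards [Filter.eventually_ne_atTop 0] with n hn
    calc 16 * √(2 * π * n) * bernoulliBiasBayesRisk n
        ≤ 16 * (√(2 * π) * √n) * (1 / (2 * √n)) := by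
          rw [hsqrt_mul]
          gcongr
          exact bernoulliBiasBayesRisk_le_one_div_mul_sqrt hn
      _ = 8 * √(2 * π) := by
          field_simp
          norm_num
  · filter_upwards [Filter.eventually_ge_atTop 2] with n hn
    calc 1 ≤ 16 * √(2 * π) / 24 := by linarith
      _ = 16 * (√(2 * π) * √n) * (1 / (24 * √n)) := by field_simp
      _ ≤ 16 * √(2 * π * n) * bernoulliBiasBayesRisk n := by
          rw [hsqrt_mul]
          gcongr
          exact one_div_mul_sqrt_le_bernoulliBiasBayesRisk hn

end DecEst
end
end

section
/- If W − Z − X^n form a Markov chain, then the SDPI constants satisfy η(P_{X^n}, P_{W|X^n}) ≤ η(P_Z, P_{W|Z}). In particular this holds when Z is any sufficient statistic of X^n for estimating W. -/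
open MeasureTheory ProbabilityTheory Real

attribute [local instance] Classical.propDecidable
open scoped ENNReal NNReal

noncomputable section
namespace DecEst

variable {Ω α β γ : Type*}


/-- Kullback–Leibler divergence in bits. -/
def klDiv2 [MeasurableSpace α] (ν μ' : Measure α) : ℝ≥0∞ :=
  if ν ≪ μ' ∧ Integrable (fun x => Real.logb 2 ((ν.rnDeriv μ' x).toReal)) ν then
    ENNReal.ofReal (∫ x, Real.logb 2 ((ν.rnDeriv μ' x).toReal) ∂ν)
  else ⊤

/-- SDPI constant of a channel `K` at input distribution `π`. -/
def eta [MeasurableSpace α] [MeasurableSpace β] (pp : Measure α) (K : Kernel α β) : ℝ≥0∞ :=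
  ⨆ (ν : Measure α) (_ : IsProbabilityMeasure ν) (_ : ν ≠ pp),
    klDiv2 (ν.bind K) (pp.bind K) / klDiv2 ν pp


/-!
If `W − Z − X` is a Markov chain, the channel `P_{W|X}` factors through `Z` as `P_{W|Z} ∘ P_{Z|X}`.
An input law `ν` of `P_{W|X}` is first sent by `P_{Z|X}` to an input law of `P_{W|Z}` with the same
law of `W` at the output, and by the data processing inequality this first stage does not increase
the divergence to the reference input. So each ratio in the supremum for `P_{W|X}` is at most a
ratio in the supremum for `P_{W|Z}`.
-/

section KullbackLeibler

variable [MeasurableSpace α] [MeasurableSpace β]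

lemma klDiv2_eq_top_of_not_ac {ν ρ : Measure α} (h : ¬ ν ≪ ρ) : klDiv2 ν ρ = ⊤ :=
  if_neg fun hν ↦ h hν.1

lemma klDiv2_eq_klDiv_mul {ν ρ : Measure α} (h : ν Set.univ = ρ Set.univ) :
    klDiv2 ν ρ = InformationTheory.klDiv ν ρ * ENNReal.ofReal (Real.log 2)⁻¹ := by
  have hlog : 0 < (Real.log 2)⁻¹ := inv_pos.mpr (Real.log_pos one_lt_two)
  have hlogb : (fun x ↦ Real.logb 2 (ν.rnDeriv ρ x).toReal)
      = fun x ↦ llr ν ρ x * (Real.log 2)⁻¹ := rfl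
  have hreal : ν.real Set.univ = ρ.real Set.univ := congrArg ENNReal.toReal h
  rw [klDiv2, InformationTheory.klDiv_def, hlogb,
    integrable_mul_const_iff (isUnit_iff_ne_zero.mpr hlog.ne')]
  split_ifs
  · rw [integral_mul_const, ENNReal.ofReal_mul' hlog.le, hreal, add_sub_cancel_right]
  · rw [ENNReal.top_mul (by simpa using hlog)]

lemma klDiv2_self (ρ : Measure α) [SigmaFinite ρ] : klDiv2 ρ ρ = 0 := by
  rw [klDiv2_eq_klDiv_mul rfl, InformationTheory.klDiv_self, zero_mul]

lemma klDiv2_comp_le {ν ρ : Measure α} [IsFiniteMeasure ν] [IsFiniteMeasure ρ]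
    (h : ν Set.univ = ρ Set.univ) (L : Kernel α β) [IsMarkovKernel L] :
    klDiv2 (L ∘ₘ ν) (L ∘ₘ ρ) ≤ klDiv2 ν ρ := by
  have hL : (L ∘ₘ ν) Set.univ = (L ∘ₘ ρ) Set.univ := by simpa only [Measure.comp_apply_univ]
  rw [klDiv2_eq_klDiv_mul h, klDiv2_eq_klDiv_mul hL]
  gcongr
  exact InformationTheory.klDiv_comp_right_le ν ρ L

end KullbackLeibler

section SDPIConstant

variable [MeasurableSpace α] [MeasurableSpace β] [MeasurableSpace γ]

lemma klDiv2_div_klDiv2_le_eta {ν ρ : Measure α} [IsProbabilityMeasure ν] (h : ν ≠ ρ)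
    (K : Kernel α β) : klDiv2 (K ∘ₘ ν) (K ∘ₘ ρ) / klDiv2 ν ρ ≤ eta ρ K :=
  le_iSup_of_le ν <| le_iSup_of_le ‹_› <| le_iSup_of_le h le_rfl

lemma eta_congr_ae {ρ : Measure α} {K K' : Kernel α β} (h : K =ᵐ[ρ] K') :
    eta ρ K = eta ρ K' := by
  refine iSup_congr fun ν ↦ iSup_congr fun _ ↦ iSup_congr fun _ ↦ ?_
  by_cases hν : ν ≪ ρ
  · rw [Measure.comp_congr h, Measure.comp_congr (hν.ae_le h)]
  · rw [klDiv2_eq_top_of_not_ac hν, ENNReal.div_top, ENNReal.div_top]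

lemma eta_comp_le (ρ : Measure α) [IsProbabilityMeasure ρ] (L : Kernel α β) [IsMarkovKernel L]
    (K : Kernel β γ) [IsFiniteKernel K] : eta ρ (K ∘ₖ L) ≤ eta (L ∘ₘ ρ) K := by
  refine iSup_le fun ν ↦ iSup_le fun _ ↦ iSup_le fun _ ↦ ?_
  rw [← Measure.comp_assoc, ← Measure.comp_assoc]
  by_cases hL : L ∘ₘ ν = L ∘ₘ ρ
  · rw [hL, klDiv2_self, ENNReal.zero_div]
    exact zero_le
  · calc klDiv2 (K ∘ₘ (L ∘ₘ ν)) (K ∘ₘ (L ∘ₘ ρ)) / klDiv2 ν ρ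
        ≤ klDiv2 (K ∘ₘ (L ∘ₘ ν)) (K ∘ₘ (L ∘ₘ ρ)) / klDiv2 (L ∘ₘ ν) (L ∘ₘ ρ) :=
          ENNReal.div_le_div_left (klDiv2_comp_le (by simp only [measure_univ]) L) _
      _ ≤ eta (L ∘ₘ ρ) K := klDiv2_div_klDiv2_le_eta hL K

end SDPIConstant

section MarkovChain

variable [MeasurableSpace Ω] [StandardBorelSpace Ω] [MeasurableSpace α] [MeasurableSpace β]
  [MeasurableSpace γ] {μ : Measure Ω} [IsFiniteMeasure μ] {X : Ω → α} {Z : Ω → β} {W : Ω → γ}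

-- `β` need not be standard Borel, so `condDistrib Z X μ` is unavailable: the kernel is obtained by
-- pushing the conditional law of `ω` given `X` forward along `Z`.
lemma exists_isMarkovKernel_compProd_eq_map_prodMk [Nonempty Ω] (hX : Measurable X)
    (hZ : Measurable Z) :
    ∃ L : Kernel α β, IsMarkovKernel L ∧ μ.map X ⊗ₘ L = μ.map fun ω ↦ (X ω, Z ω) := by
  refine ⟨(condDistrib id X μ).map Z, Kernel.IsMarkovKernel.map _ hZ, ?_⟩
  rw [Measure.compProd_map hZ, compProd_map_condDistrib aemeasurable_id,
    Measure.map_map (by fun_prop) (by fun_prop)]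
  rfl

variable [StandardBorelSpace γ] [Nonempty γ]

-- Only whether `X` lies in `A` matters, and the indicator `X ∈ A` takes values in the standard
-- Borel space `Prop`, where conditional independence can be expressed by `condDistrib`.
lemma setLIntegral_preimage_condDistrib_of_condIndepFun (hX : Measurable X) (hZ : Measurable Z)
    (hW : Measurable W) (h : W ⟂ᵢ[Z, hZ; μ] X) {A : Set α} (hA : MeasurableSet A)
    {B : Set γ} (hB : MeasurableSet B) :
    ∫⁻ ω in X ⁻¹' A, condDistrib W Z μ (Z ω) B ∂μ = μ (X ⁻¹' A ∩ W ⁻¹' B) := by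
  have hmem : Measurable (· ∈ A) := measurableSet_setOfPred.mp hA
  have hZA : Measurable fun ω ↦ (Z ω, X ω ∈ A) := hZ.prodMk (hmem.comp hX)
  have hcond : condDistrib W (fun ω ↦ (Z ω, X ω ∈ A)) μ
      =ᵐ[μ.map fun ω ↦ (Z ω, X ω ∈ A)] (condDistrib W Z μ).prodMkRight Prop :=
    (condIndepFun_iff_condDistrib_prod_ae_eq_prodMkRight hW (hmem.comp hX) hZ).mp
      (h.symm.comp hmem measurable_id)
  have hpre : (fun ω ↦ (Z ω, X ω ∈ A)) ⁻¹' (Set.univ ×ˢ {True}) = X ⁻¹' A := by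
    ext ω; simp
  rw [← hpre, ← setLIntegral_preimage_condDistrib hZA hW.aemeasurable hB
    (MeasurableSet.univ.prod (measurableSet_singleton _))]
  refine lintegral_congr_ae (ae_restrict_of_ae ?_)
  filter_upwards [ae_of_ae_map hZA.aemeasurable hcond] with ω hω
  rw [hω, Kernel.prodMkRight_apply]

lemma map_prodMk_eq_parallelComp_of_condIndepFun (hX : Measurable X) (hZ : Measurable Z)
    (hW : Measurable W) (h : W ⟂ᵢ[Z, hZ; μ] X) :
    μ.map (fun ω ↦ (X ω, W ω))
      = (Kernel.id ∥ₖ condDistrib W Z μ) ∘ₘ μ.map fun ω ↦ (X ω, Z ω) := by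
  refine Measure.ext_prod fun {A B} hA hB ↦ ?_
  rw [Measure.map_apply (hX.prodMk hW) (hA.prod hB), Set.mk_preimage_prod,
    ← setLIntegral_preimage_condDistrib_of_condIndepFun hX hZ hW h hA hB,
    Measure.bind_apply (hA.prod hB) (Kernel.aemeasurable _),
    lintegral_map (Kernel.measurable_coe _ (hA.prod hB)) (hX.prodMk hZ),
    ← lintegral_indicator (hX hA)]
  refine lintegral_congr fun ω ↦ ?_
  rw [Kernel.parallelComp_apply_prod, Kernel.id_apply, Measure.dirac_apply' _ hA]
  by_cases hω : X ω ∈ A <;> simp [hω]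

lemma condDistrib_ae_eq_comp_of_condIndepFun (hX : Measurable X) (hZ : Measurable Z)
    (hW : Measurable W) (h : W ⟂ᵢ[Z, hZ; μ] X) {L : Kernel α β} [IsFiniteKernel L]
    (hL : μ.map X ⊗ₘ L = μ.map fun ω ↦ (X ω, Z ω)) :
    condDistrib W X μ =ᵐ[μ.map X] condDistrib W Z μ ∘ₖ L := by
  refine condDistrib_ae_eq_of_measure_eq_compProd X hW.aemeasurable ?_
  rw [map_prodMk_eq_parallelComp_of_condIndepFun hX hZ hW h, ← hL,
    Measure.parallelComp_comp_compProd]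

end MarkovChain

theorem sdpi_const_le_of_markov_chain_general
    {Ω W' X' Z' : Type*} [MeasurableSpace Ω] [StandardBorelSpace Ω]
    [MeasurableSpace W'] [StandardBorelSpace W'] [Nonempty W']
    [MeasurableSpace X'] [MeasurableSpace Z']
    (μ : Measure Ω) [IsProbabilityMeasure μ] (W : Ω → W') (X : Ω → X') (Z : Ω → Z')
    (hW : Measurable W) (hX : Measurable X) (hZ : Measurable Z)
    (hMarkov : CondIndepFun (MeasurableSpace.comap Z inferInstance) hZ.comap_le W X μ) :
    eta (μ.map X) (condDistrib W X μ) ≤ eta (μ.map Z) (condDistrib W Z μ) := by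
  have : Nonempty Ω := nonempty_of_isProbabilityMeasure μ
  have : IsProbabilityMeasure (μ.map X) := Measure.isProbabilityMeasure_map hX.aemeasurable
  obtain ⟨L, _, hL⟩ := exists_isMarkovKernel_compProd_eq_map_prodMk (μ := μ) hX hZ
  have hLZ : L ∘ₘ μ.map X = μ.map Z := by
    rw [← Measure.snd_compProd, hL, Measure.snd_map_prodMk hX]
  calc eta (μ.map X) (condDistrib W X μ)
      = eta (μ.map X) (condDistrib W Z μ ∘ₖ L) :=
        eta_congr_ae (condDistrib_ae_eq_comp_of_condIndepFun hX hZ hW hMarkov hL)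
    _ ≤ eta (L ∘ₘ μ.map X) (condDistrib W Z μ) := eta_comp_le _ _ _
    _ = eta (μ.map Z) (condDistrib W Z μ) := by rw [hLZ]

/-- Lemma 4. If `W − Z − Xⁿ` form a Markov chain (i.e. `W` and `Xⁿ` are
conditionally independent given `Z`; in particular `Z` may be a sufficient statistic of `Xⁿ`
for `W`), then `η(P_{Xⁿ}, P_{W|Xⁿ}) ≤ η(P_Z, P_{W|Z})`. -/
theorem sdpi_const_le_of_markov_chain
    {Ω W' X' Z' : Type*} [MeasurableSpace Ω] [StandardBorelSpace Ω]
    [MeasurableSpace W'] [StandardBorelSpace W'] [Nonempty W']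
    [MeasurableSpace X'] [MeasurableSpace Z']
    (μ : Measure Ω) [IsProbabilityMeasure μ]
    (n : ℕ) (W : Ω → W') (Xn : Ω → Fin n → X') (Z : Ω → Z')
    (hW : Measurable W) (hXn : Measurable Xn) (hZ : Measurable Z)
    (hMarkov : CondIndepFun (MeasurableSpace.comap Z inferInstance) hZ.comap_le W Xn μ) :
    eta (μ.map Xn) (condDistrib W Xn μ) ≤ eta (μ.map Z) (condDistrib W Z μ) :=
  sdpi_const_le_of_markov_chain_general μ W Xn Z hW hXn hZ hMarkov


end DecEst
end
end

section
/- Suppose W is uniformly distributed on {−1,1}^d, and given W the sample X ∈ {−1,1}^d has independent coordinates with P_{X_j|W_j=w_j}(x_j) = (1 + x_j w_j δ)/2 for some δ ∈ [0,1] (i.e., each coordinate passes through BSC((1−δ)/2)). The processor quantizes X to a b-bit message and sends it over T uses of an arbitrary discrete memoryless channel P_{V|U} with capacity C. Then for any quantizer and encoder, I(W; V^T) ≤ min{ d (1 − h₂((1−δ)/2)) η_T, δ² b η_T, δ² C T }, where η_T is the channel-contraction coefficient (η_T = 1 − (1 − η(P_{V|U}))^T with feedback; η_T = η(P_{V|U}^{⊗T})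 without feedback). -/
open MeasureTheory ProbabilityTheory Real

attribute [local instance] Classical.propDecidable
open scoped ENNReal NNReal

noncomputable section
namespace DecEst

variable {Ω α β γ : Type*}


/-- Mutual information (in bits) of a joint distribution. -/
def miM [MeasurableSpace α] [MeasurableSpace β] (pp : Measure (α × β)) : ℝ≥0∞ :=
  klDiv2 pp ((pp.map Prod.fst).prod (pp.map Prod.snd))

/-- Mutual information (in bits) between two random variables. -/
def mi [MeasurableSpace Ω] [MeasurableSpace α] [MeasurableSpace β]
    (μ : Measure Ω) (X : Ω → α) (Y : Ω → β) : ℝ :=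
  (miM (μ.map fun ω => (X ω, Y ω))).toReal

/-- SDPI constant of a channel `K` (supremum over input distributions). -/
def etaMax [MeasurableSpace α] [MeasurableSpace β] (K : Kernel α β) : ℝ≥0∞ :=
  ⨆ (pp : Measure α) (_ : IsProbabilityMeasure pp), eta pp K

/-- Shannon capacity (in bits) of a channel. -/
def capacity [MeasurableSpace α] [MeasurableSpace β] (K : Kernel α β) [IsSFiniteKernel K] : ℝ :=
  ⨆ pp : ProbabilityMeasure α, (miM ((pp : Measure α) ⊗ₘ K)).toReal

/-- `T`-fold memoryless product of a channel. -/
def kernelPi [MeasurableSpace α] [MeasurableSpace β] [Countable α] [MeasurableSingletonClass α]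
    (T : ℕ) (K : Kernel α β) : Kernel (Fin T → α) (Fin T → β) where
  toFun u := Measure.pi fun t => K (u t)
  measurable' := measurable_of_countable _

/-- Binary symmetric channel with crossover probability `ε`. -/
def bsc (ε : ℝ) : Kernel Bool Bool where
  toFun b := (ENNReal.ofReal ε) • Measure.dirac (!b) + (ENNReal.ofReal (1 - ε)) • Measure.dirac b
  measurable' := measurable_of_countable _

/-- Binary entropy function (in bits). -/
def binEnt (p : ℝ) : ℝ := (Real.negMulLog p + Real.negMulLog (1 - p)) / Real.log 2

/-!
On finite alphabets, laws are vectors and channels are stochastic matrices, and everything reduces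
to contraction of relative entropy along `W → X → message → V^T`.

* By the chain rule, one more channel use turns a contraction factor `η'` into `η + (1 - η) η'`:
  the new output contracts the divergence of the posterior laws of the message by `η`, and that
  divergence is exactly what the earlier outputs lost. Hence `η_T = 1 - (1 - η)^T` with feedback.
* With respect to the uniform law the binary symmetric channel contracts relative entropy by `δ²`,
  because `log 2 - h((1 + m) / 2)` is a power series in `m²` with nonnegative coefficients and
  no constant term, and the channel replaces the bias `m` by `δ m`. This factor tensorizes. The
  channel from `W` to `X` is symmetric and `W` is uniform, so the same factor applies to the
  posterior law of `X` given `V^T`, which it maps to that of `W`.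

The three bounds are `η_T I(W; X)`, `η_T I(W; message) ≤ η_T δ² I(X; message)` and
`δ² I(X; V^T) ≤ δ² C T`.
-/

open scoped Matrix Kronecker

section RelativeEntropy

variable {A B : Type*}

lemma pos_of_pos_of_ac {p q : A → ℝ} (hq : 0 ≤ q) (hpq : ∀ a, q a = 0 → p a = 0) {a : A}
    (ha : 0 < p a) : 0 < q a :=
  (hq a).lt_of_ne' fun h => ha.ne' (hpq a h)

variable [Fintype A] [Fintype B]

/-- Relative entropy (in nats) of the normalizations of `p` and `q`, weighted by the mass of `p`.
It is the Kullback–Leibler divergence on probability vectors; being homogeneous of degree one in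
`p` and of degree zero in `q`, it also applies to unnormalized slices of joint distributions. -/
def relEnt (p q : A → ℝ) : ℝ :=
  ∑ a, p a * log ((p a / ∑ a', p a') / (q a / ∑ a', q a'))

@[simp]
lemma relEnt_zero_left (q : A → ℝ) : relEnt 0 q = 0 := by simp [relEnt]

lemma relEnt_smul_left (c : ℝ) (p q : A → ℝ) : relEnt (c • p) q = c * relEnt p q := by
  obtain rfl | hc := eq_or_ne c 0
  · simp
  · simp only [relEnt, Pi.smul_apply, smul_eq_mul, ← Finset.mul_sum, mul_div_mul_left _ _ hc,
      mul_assoc]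

lemma relEnt_smul_right {c : ℝ} {p : A → ℝ} (h : c = 0 → p = 0) (q : A → ℝ) :
    relEnt p (c • q) = relEnt p q := by
  obtain rfl | hc := eq_or_ne c 0
  · simp [h rfl]
  · simp only [relEnt, Pi.smul_apply, smul_eq_mul, ← Finset.mul_sum, mul_div_mul_left _ _ hc]

lemma relEnt_smul_smul (c : ℝ) (p q : A → ℝ) : relEnt (c • p) (c • q) = c * relEnt p q := by
  rw [relEnt_smul_right (fun hc => by rw [hc, zero_smul]), relEnt_smul_left]

@[simp]
lemma relEnt_self (p : A → ℝ) : relEnt p p = 0 := by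
  refine Finset.sum_eq_zero fun a _ => ?_
  obtain h | h := eq_or_ne (p a / ∑ a', p a') 0
  · simp [h]
  · simp [div_self h]

lemma relEnt_of_subsingleton [Subsingleton A] (p q : A → ℝ) : relEnt p q = 0 := by
  refine Finset.sum_eq_zero fun a _ => ?_
  rw [Fintype.sum_subsingleton p a, Fintype.sum_subsingleton q a]
  obtain h | h := eq_or_ne (q a) 0
  · simp [h]
  · simp [div_self h]

lemma relEnt_comp_equiv (e : A ≃ B) (p q : B → ℝ) : relEnt (p ∘ e) (q ∘ e) = relEnt p q := by
  simp only [relEnt, Function.comp_apply, e.sum_comp p, e.sum_comp q]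
  exact e.sum_comp fun b => p b * log ((p b / ∑ b', p b') / (q b / ∑ b', q b'))

lemma sum_pos_of_pos {p : A → ℝ} (hp : 0 ≤ p) {a : A} (ha : 0 < p a) : 0 < ∑ a', p a' :=
  Finset.sum_pos' (fun a' _ => hp a') ⟨a, Finset.mem_univ a, ha⟩

lemma relEnt_nonneg {p q : A → ℝ} (hp : 0 ≤ p) (hq : 0 ≤ q) (hpq : ∀ a, q a = 0 → p a = 0) :
    0 ≤ relEnt p q := by
  set P := ∑ a, p a
  set Q := ∑ a, q a
  have hP : 0 ≤ P := Finset.sum_nonneg fun a _ => hp a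
  have term_le (a : A) : p a - P * (q a / Q) ≤ p a * log ((p a / P) / (q a / Q)) := by
    obtain ha | ha : 0 = p a ∨ 0 < p a := (hp a).eq_or_lt
    · have : 0 ≤ Q := Finset.sum_nonneg fun a _ => hq a
      have : 0 ≤ q a := hq a
      rw [← ha, zero_mul, zero_sub, neg_nonpos]
      positivity
    · have hqa := pos_of_pos_of_ac hq hpq ha
      have hP : 0 < P := sum_pos_of_pos hp ha
      have hQ : 0 < Q := sum_pos_of_pos hq hqa
      calc p a - P * (q a / Q) = p a * (1 - ((p a / P) / (q a / Q))⁻¹) := by field_simp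
        _ ≤ _ := by gcongr; exact one_sub_inv_le_log_of_pos (by positivity)
  calc 0 ≤ P - P * (Q / Q) := sub_nonneg.2 (mul_le_of_le_one_right hP (div_self_le_one Q))
    _ = ∑ a, (p a - P * (q a / Q)) := by
      rw [Finset.sum_sub_distrib, ← Finset.mul_sum, ← Finset.sum_div]
    _ ≤ relEnt p q := Finset.sum_le_sum fun a _ => term_le a

lemma relEnt_one_le {p : A → ℝ} (hp : 0 ≤ p) :
    relEnt p 1 ≤ (∑ a, p a) * log (Fintype.card A) := by
  have relEnt_eq : relEnt p 1 = ∑ a, p a * log (p a / (∑ a', p a') * Fintype.card A) := by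
    simp [relEnt]
  rw [relEnt_eq, Finset.sum_mul]
  refine Finset.sum_le_sum fun a _ => ?_
  obtain ha | ha : 0 = p a ∨ 0 < p a := (hp a).eq_or_lt
  · simp [← ha]
  have hP := sum_pos_of_pos hp ha
  have : 0 < Fintype.card A := Fintype.card_pos_iff.2 ⟨a⟩
  have hle : p a / ∑ a', p a' ≤ 1 :=
    div_le_one_of_le₀ (Finset.single_le_sum (fun a' _ => hp a') (Finset.mem_univ a)) hP.le
  gcongr
  exact mul_le_of_le_one_left (Nat.cast_nonneg _) hle

lemma relEnt_prod {p q : A × B → ℝ} (hp : 0 ≤ p) (hq : 0 ≤ q) (hpq : ∀ x, q x = 0 → p x = 0) :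
    relEnt p q = relEnt (fun a => ∑ b, p (a, b)) (fun a => ∑ b, q (a, b)) +
      ∑ a, relEnt (fun b => p (a, b)) fun b => q (a, b) := by
  simp only [relEnt, Fintype.sum_prod_type, ← Finset.sum_add_distrib, Finset.sum_mul]
  refine Finset.sum_congr rfl fun a _ => Finset.sum_congr rfl fun b _ => ?_
  obtain hab | hab : 0 = p (a, b) ∨ 0 < p (a, b) := (hp _).eq_or_lt
  · simp [← hab]
  have hqab := pos_of_pos_of_ac hq hpq hab
  have hpa : 0 < ∑ b', p (a, b') := sum_pos_of_pos (p := fun b' => p (a, b')) (fun _ => hp _) hab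
  have hqa : 0 < ∑ b', q (a, b') := sum_pos_of_pos (p := fun b' => q (a, b')) (fun _ => hq _) hqab
  have hP : 0 < ∑ a', ∑ b', p (a', b') := by
    simpa only [Fintype.sum_prod_type] using sum_pos_of_pos hp hab
  have hQ : 0 < ∑ a', ∑ b', q (a', b') := by
    simpa only [Fintype.sum_prod_type] using sum_pos_of_pos hq hqab
  rw [← mul_add, ← log_mul (by positivity) (by positivity)]
  congr 2
  field_simp

lemma relEnt_prod_mul {p : A × B → ℝ} {q : A → ℝ} {r : B → ℝ} (hp : 0 ≤ p) (hq : 0 ≤ q)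
    (hr : 0 ≤ r) (hpq : ∀ a b, q a * r b = 0 → p (a, b) = 0) :
    relEnt p (fun x => q x.1 * r x.2) =
      relEnt (fun a => ∑ b, p (a, b)) q + ∑ a, relEnt (fun b => p (a, b)) r := by
  rw [relEnt_prod hp (fun x => mul_nonneg (hq _) (hr _)) fun x => hpq x.1 x.2]
  congr 1
  · have : (fun a => ∑ b, q a * r b) = (∑ b, r b) • q := by
      ext a; simp [← Finset.mul_sum, mul_comm]
    rw [this, relEnt_smul_right]
    intro hr0
    have hr0 := (Finset.sum_eq_zero_iff_of_nonneg fun b _ => hr b).1 hr0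
    ext a
    exact Finset.sum_eq_zero fun b hb => hpq a b (by rw [hr0 b hb, mul_zero])
  · refine Finset.sum_congr rfl fun a _ => relEnt_smul_right (c := q a) (fun hqa => ?_) r
    ext b
    exact hpq a b (by rw [hqa, zero_mul])

lemma relEnt_mul_mul {p q : A → ℝ} {p' q' : B → ℝ} (hp : p ∈ stdSimplex ℝ A)
    (hp' : p' ∈ stdSimplex ℝ B) (hq : 0 ≤ q) (hq' : 0 ≤ q') (hpq : ∀ a, q a = 0 → p a = 0)
    (hpq' : ∀ b, q' b = 0 → p' b = 0) :
    relEnt (fun x : A × B => p x.1 * p' x.2) (fun x => q x.1 * q' x.2) =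
      relEnt p q + relEnt p' q' := by
  have hac (a : A) (b : B) (h : q a * q' b = 0) : p a * p' b = 0 :=
    mul_eq_zero.2 ((mul_eq_zero.1 h).imp (hpq a) (hpq' b))
  rw [relEnt_prod_mul (fun x => mul_nonneg (hp.1 x.1) (hp'.1 x.2)) hq hq' hac]
  congr 1
  · simp only [← Finset.mul_sum, hp'.2, mul_one]
  · calc ∑ a, relEnt (p a • p') q' = relEnt p' q' := by
          simp only [relEnt_smul_left, ← Finset.sum_mul, hp.2, one_mul]

end RelativeEntropy

section Channel

variable {A B : Type*} {p q : A → ℝ} {k : Matrix A B ℝ}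

lemma mul_ac_mul (hpq : ∀ a, q a = 0 → p a = 0) (r : A → ℝ) (a : A) (h : q a * r a = 0) :
    p a * r a = 0 := by
  obtain h | h := mul_eq_zero.1 h
  · rw [hpq a h, zero_mul]
  · rw [h, mul_zero]

/-- A channel from `A` to `B`, as the matrix of its transition probabilities: the output law for
an input law `p` is `p ᵥ* k`, and channels are composed by multiplication. -/
def IsStochastic [Fintype B] (k : Matrix A B ℝ) : Prop := ∀ a, k a ∈ stdSimplex ℝ B

lemma IsStochastic.nonneg [Fintype B] (hk : IsStochastic k) (a : A) : 0 ≤ k a := (hk a).1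

lemma IsStochastic.sum_row [Fintype B] (hk : IsStochastic k) (a : A) : ∑ b, k a b = 1 := (hk a).2

lemma IsStochastic.of_submatrix_equiv {B' : Type*} [Fintype B] [Fintype B'] (e : B' ≃ B)
    (hk : IsStochastic (k.submatrix id e)) : IsStochastic k := fun a =>
  ⟨e.forall_congr_right.1 (hk.nonneg a), (e.sum_comp (k a)).symm.trans (hk.sum_row a)⟩

lemma isStochastic_one [Fintype A] : IsStochastic (1 : Matrix A A ℝ) := fun a =>
  ⟨fun b => by by_cases h : a = b <;> simp [h, Matrix.one_apply], by simp [Matrix.one_apply]⟩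

variable [Fintype A]

lemma vecMul_nonneg (hp : 0 ≤ p) (hk : ∀ a, 0 ≤ k a) : 0 ≤ p ᵥ* k :=
  fun b => Finset.sum_nonneg fun a _ => mul_nonneg (hp a) (hk a b)

lemma mul_eq_zero_of_vecMul_eq_zero (hp : 0 ≤ p) (hk : ∀ a, 0 ≤ k a) {b : B}
    (hb : (p ᵥ* k) b = 0) (a : A) : p a * k a b = 0 :=
  (Finset.sum_eq_zero_iff_of_nonneg fun a _ => mul_nonneg (hp a) (hk a b)).1 hb a
    (Finset.mem_univ a)

lemma row_ac_vecMul (hp : 0 ≤ p) (hk : ∀ a, 0 ≤ k a) {a : A} (ha : p a ≠ 0) (b : B)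
    (hb : (p ᵥ* k) b = 0) : k a b = 0 :=
  (mul_eq_zero.1 (mul_eq_zero_of_vecMul_eq_zero hp hk hb a)).resolve_left ha

lemma vecMul_ac_vecMul (hq : 0 ≤ q) (hpq : ∀ a, q a = 0 → p a = 0) (hk : ∀ a, 0 ≤ k a) (b : B)
    (hb : (q ᵥ* k) b = 0) : (p ᵥ* k) b = 0 :=
  Finset.sum_eq_zero fun a _ =>
    mul_ac_mul hpq (k · b) a (mul_eq_zero_of_vecMul_eq_zero hq hk hb a)

lemma submatrix_one_mul {D : Type*} (f : D → A) (k : Matrix A B ℝ) :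
    (1 : Matrix A A ℝ).submatrix f id * k = k.submatrix f id :=
  Matrix.one_submatrix_mul f (Equiv.refl A) k

variable [Fintype B]

lemma IsStochastic.sum_vecMul (hk : IsStochastic k) (p : A → ℝ) :
    ∑ b, (p ᵥ* k) b = ∑ a, p a := by
  simp only [Matrix.vecMul, dotProduct]
  rw [Finset.sum_comm]
  simp only [← Finset.mul_sum, hk.sum_row, mul_one]

lemma IsStochastic.mul {D : Type*} {k : Matrix D A ℝ} {l : Matrix A B ℝ} (hk : IsStochastic k)
    (hl : IsStochastic l) : IsStochastic (k * l) := fun d =>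
  ⟨vecMul_nonneg (hk.nonneg d) hl.nonneg, (hl.sum_vecMul (k d)).trans (hk.sum_row d)⟩

lemma relEnt_eq_add_sum_posterior (hp : 0 ≤ p) (hq : 0 ≤ q) (hpq : ∀ a, q a = 0 → p a = 0)
    (hk : IsStochastic k) :
    relEnt p q = relEnt (p ᵥ* k) (q ᵥ* k) +
      ∑ b, relEnt (fun a => p a * k a b) fun a => q a * k a b := by
  have hpk (x : A × B) : 0 ≤ p x.1 * k x.1 x.2 := mul_nonneg (hp _) (hk.nonneg _ _)
  have hqk (x : A × B) : 0 ≤ q x.1 * k x.1 x.2 := mul_nonneg (hq _) (hk.nonneg _ _)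
  have hac (x : A × B) : q x.1 * k x.1 x.2 = 0 → p x.1 * k x.1 x.2 = 0 :=
    mul_ac_mul hpq (k · x.2) x.1
  have forward := relEnt_prod hpk hqk hac
  have backward := relEnt_prod (p := fun x : B × A => p x.2 * k x.2 x.1)
    (q := fun x : B × A => q x.2 * k x.2 x.1) (fun x => hpk x.swap) (fun x => hqk x.swap)
    fun x => hac x.swap
  have slice (a : A) : relEnt (fun b => p a * k a b) (fun b => q a * k a b) = 0 := by
    change relEnt (p a • k a) (q a • k a) = 0
    rw [relEnt_smul_right (fun h => by rw [hpq a h, zero_smul]), relEnt_smul_left, relEnt_self,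
      mul_zero]
  rw [← relEnt_comp_equiv (Equiv.prodComm B A)] at forward
  simp only [← Finset.mul_sum, hk.sum_row, mul_one, slice, Finset.sum_const_zero, add_zero]
    at forward
  exact forward.symm.trans backward

lemma sum_mul_relEnt_row {u : B → ℝ} (hp : 0 ≤ p) (hk : ∀ a, 0 ≤ k a)
    (hu : 0 ≤ u) (hpku : ∀ b, u b = 0 → (p ᵥ* k) b = 0) :
    ∑ a, p a * relEnt (k a) u = relEnt (p ᵥ* k) u +
      ∑ b, relEnt (fun a => p a * k a b) fun a => p a * ∑ b', k a b' := by
  set r : A → ℝ := fun a => p a * ∑ b', k a b' with hr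
  have hJ (x : A × B) : 0 ≤ p x.1 * k x.1 x.2 := mul_nonneg (hp _) (hk _ _)
  have hr0 : 0 ≤ r := fun a => mul_nonneg (hp a) (Finset.sum_nonneg fun b _ => hk a b)
  have hac (a : A) (b : B) (h : r a * u b = 0) : p a * k a b = 0 := by
    obtain h | h := mul_eq_zero.1 h
    · simp only [hr, Finset.mul_sum] at h
      exact (Finset.sum_eq_zero_iff_of_nonneg fun b _ => hJ (a, b)).1 h b (Finset.mem_univ b)
    · exact mul_eq_zero_of_vecMul_eq_zero hp hk (hpku b h) a
  have forward := relEnt_prod_mul hJ hr0 hu hac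
  have backward := relEnt_prod_mul (p := fun x : B × A => p x.2 * k x.2 x.1) (fun x => hJ x.swap)
    hu hr0 fun b a h => hac a b (mul_comm (u b) (r a) ▸ h)
  calc ∑ a, p a * relEnt (k a) u
      = relEnt (fun x : A × B => p x.1 * k x.1 x.2) fun x => r x.1 * u x.2 := by
        simp only [forward, ← Finset.mul_sum, ← hr, relEnt_self, zero_add, ← relEnt_smul_left]
        rfl
    _ = relEnt (fun x : B × A => p x.2 * k x.2 x.1) fun x => u x.1 * r x.2 := by
        rw [← relEnt_comp_equiv (Equiv.prodComm B A)]
        simp only [Function.comp_def, Equiv.prodComm_apply, Prod.fst_swap, Prod.snd_swap, mul_comm]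
    _ = _ := backward

/-- Mutual information (in nats) between the input and the output of the channel `k`, for the
input law `p`; homogeneous of degree one in `p`. -/
def mutualInfo (p : A → ℝ) (k : Matrix A B ℝ) : ℝ := ∑ a, p a * relEnt (k a) (p ᵥ* k)

lemma mutualInfo_smul (c : ℝ) (p : A → ℝ) (k : Matrix A B ℝ) :
    mutualInfo (c • p) k = c * mutualInfo p k := by
  obtain rfl | hc := eq_or_ne c 0
  · simp [mutualInfo]
  · simp only [mutualInfo, Matrix.smul_vecMul, Pi.smul_apply, smul_eq_mul, mul_assoc,
      ← Finset.mul_sum, relEnt_smul_right (absurd · hc)]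

lemma mutualInfo_eq_sum_posterior (hp : 0 ≤ p) (hk : ∀ a, 0 ≤ k a) :
    mutualInfo p k = ∑ b, relEnt (fun a => p a * k a b) fun a => p a * ∑ b', k a b' := by
  rw [mutualInfo, sum_mul_relEnt_row hp hk (vecMul_nonneg hp hk) fun _ => id, relEnt_self, zero_add]

lemma mutualInfo_submatrix_equiv {B' : Type*} [Fintype B'] (p : A → ℝ) (k : Matrix A B ℝ)
    (e : B' ≃ B) : mutualInfo p (k.submatrix id e) = mutualInfo p k :=
  Finset.sum_congr rfl fun a _ => congr_arg (p a * ·) (relEnt_comp_equiv e (k a) (p ᵥ* k))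

lemma mutualInfo_nonneg (hp : 0 ≤ p) (hk : ∀ a, 0 ≤ k a) : 0 ≤ mutualInfo p k := by
  refine Finset.sum_nonneg fun a _ => ?_
  obtain ha | ha := eq_or_ne (p a) 0
  · simp [ha]
  · exact mul_nonneg (hp a)
      (relEnt_nonneg (hk a) (vecMul_nonneg hp hk) (row_ac_vecMul hp hk ha))

lemma sum_mul_relEnt_row_eq_mutualInfo_add {u : B → ℝ} (hp : 0 ≤ p) (hk : ∀ a, 0 ≤ k a)
    (hu : 0 ≤ u) (hpku : ∀ b, u b = 0 → (p ᵥ* k) b = 0) :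
    ∑ a, p a * relEnt (k a) u = mutualInfo p k + relEnt (p ᵥ* k) u := by
  rw [sum_mul_relEnt_row hp hk hu hpku, mutualInfo_eq_sum_posterior hp hk, add_comm]

lemma mutualInfo_le_sum_mul_relEnt {u : B → ℝ} (hp : 0 ≤ p) (hk : ∀ a, 0 ≤ k a) (hu : 0 ≤ u)
    (hpku : ∀ b, u b = 0 → (p ᵥ* k) b = 0) : mutualInfo p k ≤ ∑ a, p a * relEnt (k a) u := by
  rw [sum_mul_relEnt_row_eq_mutualInfo_add hp hk hu hpku]
  exact le_add_of_nonneg_right (relEnt_nonneg (vecMul_nonneg hp hk) hu hpku)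

lemma relEnt_vecMul_le_sum {u : B → ℝ} (hp : 0 ≤ p) (hk : ∀ a, 0 ≤ k a) (hu : 0 ≤ u)
    (hpku : ∀ b, u b = 0 → (p ᵥ* k) b = 0) : relEnt (p ᵥ* k) u ≤ ∑ a, p a * relEnt (k a) u := by
  rw [sum_mul_relEnt_row_eq_mutualInfo_add hp hk hu hpku]
  exact le_add_of_nonneg_left (mutualInfo_nonneg hp hk)

lemma mutualInfo_le_log_card (hp : 0 ≤ p) (hk : IsStochastic k) :
    mutualInfo p k ≤ (∑ a, p a) * log (Fintype.card B) := by
  refine (mutualInfo_le_sum_mul_relEnt (u := 1) hp hk.nonneg zero_le_one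
    fun _ h => absurd h one_ne_zero).trans ?_
  rw [Finset.sum_mul]
  refine Finset.sum_le_sum fun a _ => mul_le_mul_of_nonneg_left ?_ (hp a)
  simpa [hk.sum_row] using relEnt_one_le (hk.nonneg a)

lemma relEnt_vecMul_le (hp : 0 ≤ p) (hq : 0 ≤ q) (hpq : ∀ a, q a = 0 → p a = 0)
    (hk : IsStochastic k) : relEnt (p ᵥ* k) (q ᵥ* k) ≤ relEnt p q := by
  rw [relEnt_eq_add_sum_posterior hp hq hpq hk]
  exact le_add_of_nonneg_right <| Finset.sum_nonneg fun b _ =>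
    relEnt_nonneg (fun a => mul_nonneg (hp a) (hk.nonneg a b))
      (fun a => mul_nonneg (hq a) (hk.nonneg a b)) (mul_ac_mul hpq (k · b))

lemma mutualInfo_submatrix {D : Type*} [Fintype D] (r : D → ℝ) (f : D → A) (k : Matrix A B ℝ) :
    mutualInfo r (k.submatrix f id) = mutualInfo (r ᵥ* (1 : Matrix A A ℝ).submatrix f id) k := by
  simp only [mutualInfo, Matrix.vecMul_vecMul, submatrix_one_mul]
  simp only [Matrix.vecMul, dotProduct, Finset.sum_mul]
  rw [Finset.sum_comm]
  simp only [Matrix.submatrix_apply, Matrix.one_apply, id, mul_ite, mul_one, mul_zero, ite_mul,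
    zero_mul, Finset.sum_ite_eq, Finset.mem_univ, if_true]
  rfl

end Channel

section Contraction

variable {A B A' B' D : Type*} [Fintype A] [Fintype A'] [Fintype D] {q : A → ℝ}
  {k : Matrix A B ℝ} {η : ℝ}

lemma mul_vecMul_kronecker (q : A → ℝ) (q' : A' → ℝ) (k : Matrix A B ℝ) (l : Matrix A' B' ℝ) :
    (fun x : A × A' => q x.1 * q' x.2) ᵥ* (k ⊗ₖ l) = fun x => (q ᵥ* k) x.1 * (q' ᵥ* l) x.2 := by
  ext ⟨b, b'⟩
  simp only [Matrix.vecMul, dotProduct, Matrix.kronecker_apply, Fintype.sum_prod_type,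
    Finset.sum_mul_sum, mul_mul_mul_comm]

lemma vecMul_kronecker_slice (p : A × A' → ℝ) (k : Matrix A B ℝ) (l : Matrix A' B' ℝ) (b : B) :
    (fun b' => (p ᵥ* (k ⊗ₖ l)) (b, b')) = (kᵀ b ᵥ* Matrix.of (Function.curry p)) ᵥ* l := by
  ext b'
  simp only [Matrix.vecMul, dotProduct, Matrix.kronecker_apply, Fintype.sum_prod_type,
    Finset.sum_mul, Matrix.of_apply, Function.curry_apply, Matrix.transpose_apply]
  rw [Finset.sum_comm]
  exact Finset.sum_congr rfl fun a' _ => Finset.sum_congr rfl fun a _ => by ring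

variable [Fintype B']

lemma sum_vecMul_kronecker (p : A × A' → ℝ) (k : Matrix A B ℝ) {l : Matrix A' B' ℝ}
    (hl : IsStochastic l) :
    (fun b => ∑ b', (p ᵥ* (k ⊗ₖ l)) (b, b')) = (fun a => ∑ a', p (a, a')) ᵥ* k := by
  ext b
  rw [Finset.sum_congr rfl fun b' _ => congr_fun (vecMul_kronecker_slice p k l b) b',
    hl.sum_vecMul]
  simp only [Matrix.vecMul, dotProduct, Matrix.of_apply, Function.curry_apply,
    Matrix.transpose_apply, Finset.sum_mul]
  rw [Finset.sum_comm]
  simp only [mul_comm]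

variable [Fintype B]

/-- Strong data processing inequality at a fixed reference law `q`: the channel `k` contracts
relative entropy with respect to `q` by the factor `η`. -/
def SDPIAt (q : A → ℝ) (k : Matrix A B ℝ) (η : ℝ) : Prop :=
  ∀ p, 0 ≤ p → (∀ a, q a = 0 → p a = 0) → relEnt (p ᵥ* k) (q ᵥ* k) ≤ η * relEnt p q

/-- Strong data processing inequality for all reference laws: `η` is an upper bound for the
contraction coefficient of the channel `k`. -/
def SDPI (k : Matrix A B ℝ) (η : ℝ) : Prop := ∀ q, 0 ≤ q → SDPIAt q k η

lemma SDPI.mutualInfo_mul_le (hk : SDPI k η) {r : D → ℝ} (hr : 0 ≤ r) {l : Matrix D A ℝ}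
    (hl : ∀ d, 0 ≤ l d) : mutualInfo r (l * k) ≤ η * mutualInfo r l := by
  rw [mutualInfo, mutualInfo, Finset.mul_sum]
  refine Finset.sum_le_sum fun d _ => ?_
  rw [mul_left_comm, ← Matrix.vecMul_vecMul, Matrix.mul_apply_eq_vecMul]
  obtain hd | hd := eq_or_ne (r d) 0
  · simp [hd]
  · exact mul_le_mul_of_nonneg_left
      (hk _ (vecMul_nonneg hr hl) _ (hl d) (row_ac_vecMul hr hl hd)) (hr d)

lemma SDPI.submatrix (hk : SDPI k η) (hη : 0 ≤ η) (f : D → A) : SDPI (k.submatrix f id) η := by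
  intro q hq p hp hpq
  have hf : IsStochastic ((1 : Matrix A A ℝ).submatrix f id) := fun d => isStochastic_one (f d)
  rw [← submatrix_one_mul, ← Matrix.vecMul_vecMul, ← Matrix.vecMul_vecMul]
  calc _ ≤ η * relEnt (p ᵥ* (1 : Matrix A A ℝ).submatrix f id)
        (q ᵥ* (1 : Matrix A A ℝ).submatrix f id) :=
      hk _ (vecMul_nonneg hq hf.nonneg) _ (vecMul_nonneg hp hf.nonneg)
        (vecMul_ac_vecMul hq hpq hf.nonneg)
    _ ≤ η * relEnt p q := mul_le_mul_of_nonneg_left (relEnt_vecMul_le hp hq hpq hf) hη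

lemma mutualInfo_mul_le_of_isSymm {n : Matrix A A ℝ} (hn : IsStochastic n) (hsymm : n.IsSymm)
    (hη : SDPIAt 1 n η) (hk : IsStochastic k) {c : ℝ} (hc : 0 ≤ c) :
    mutualInfo (fun _ => c) (n * k) ≤ η * mutualInfo (fun _ => c) k := by
  have one_vecMul : (1 : A → ℝ) ᵥ* n = 1 := by
    ext a
    simp only [Matrix.vecMul, one_dotProduct, Pi.one_apply, ← hn.sum_row a]
    exact Finset.sum_congr rfl fun a' _ => hsymm.apply a a'
  have backward {l : Matrix A B ℝ} (hl : IsStochastic l) :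
      mutualInfo (fun _ => c) l = c * ∑ b, relEnt (lᵀ b) 1 := by
    rw [mutualInfo_eq_sum_posterior (fun _ => hc) hl.nonneg, Finset.mul_sum]
    refine Finset.sum_congr rfl fun b _ => ?_
    simp only [hl.sum_row]
    exact relEnt_smul_smul c (lᵀ b) 1
  have column (b : B) : (n * k)ᵀ b = kᵀ b ᵥ* n := by
    rw [Matrix.transpose_mul, hsymm.eq, Matrix.mul_apply_eq_vecMul]
  rw [backward (hn.mul hk), backward hk, mul_left_comm, Finset.mul_sum _ _ η]
  refine mul_le_mul_of_nonneg_left (Finset.sum_le_sum fun b _ => ?_) hc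
  have := hη (kᵀ b) (fun a => hk.nonneg a b) fun _ h => absurd h one_ne_zero
  rwa [one_vecMul, ← column] at this

lemma SDPIAt.of_submatrix_equiv (e : A' ≃ A) (f : B' ≃ B)
    (h : SDPIAt (q ∘ e) (k.submatrix e f) η) : SDPIAt q k η := by
  intro p hp hpq
  have := h (p ∘ e) (fun a => hp (e a)) fun a => hpq (e a)
  simpa only [Matrix.submatrix_vecMul_equiv, Function.comp_assoc, Equiv.self_comp_symm,
    Function.comp_id, relEnt_comp_equiv] using this

lemma sum_relEnt_vecMul_transpose_le (hk : IsStochastic k) {l : Matrix A A' ℝ} {u : A' → ℝ}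
    (hl : ∀ a, 0 ≤ l a) (hu : 0 ≤ u) (hlu : ∀ a' a, u a' = 0 → l a a' = 0) :
    ∑ b, relEnt (kᵀ b ᵥ* l) u ≤ ∑ a, relEnt (l a) u := by
  calc ∑ b, relEnt (kᵀ b ᵥ* l) u ≤ ∑ b, ∑ a, kᵀ b a * relEnt (l a) u :=
        Finset.sum_le_sum fun b _ => relEnt_vecMul_le_sum (fun a => hk.nonneg a b) hl hu
          fun a' h => Finset.sum_eq_zero fun a _ => mul_eq_zero_of_right _ (hlu a' a h)
    _ = ∑ a, relEnt (l a) u := by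
        rw [Finset.sum_comm]
        simp only [← Finset.sum_mul, Matrix.transpose_apply, hk.sum_row, one_mul]

/-
The chain rule splits off the first coordinate of the output; given it, the second coordinate
is the output of `l` for a mixture of the conditional laws of its input.
-/
lemma SDPIAt.kronecker {q' : A' → ℝ} {l : Matrix A' B' ℝ} (hk : SDPIAt q k η)
    (hl : SDPIAt q' l η) (hq : 0 ≤ q) (hq' : 0 ≤ q') (hk1 : IsStochastic k) (hl1 : IsStochastic l)
    (hη : 0 ≤ η) : SDPIAt (fun x : A × A' => q x.1 * q' x.2) (k ⊗ₖ l) η := by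
  intro p hp hpq
  have hpq (a : A) (a' : A') : q a * q' a' = 0 → p (a, a') = 0 := hpq (a, a')
  have hkl (x : A × A') : 0 ≤ (k ⊗ₖ l) x :=
    fun y => mul_nonneg (hk1.nonneg x.1 y.1) (hl1.nonneg x.2 y.2)
  have hqq' : 0 ≤ fun x : A × A' => q x.1 * q' x.2 := fun x => mul_nonneg (hq _) (hq' _)
  have hout := vecMul_ac_vecMul hqq' (fun x => hpq x.1 x.2) hkl
  have mixture_nonneg (b : B) : 0 ≤ kᵀ b ᵥ* Matrix.of (Function.curry p) :=
    vecMul_nonneg (fun a => hk1.nonneg a b) fun a a' => hp (a, a')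
  have mixture_ac (b : B) (a' : A') (h : q' a' = 0) :
      (kᵀ b ᵥ* Matrix.of (Function.curry p)) a' = 0 :=
    Finset.sum_eq_zero fun a _ => mul_eq_zero_of_right _ (hpq a a' (by rw [h, mul_zero]))
  rw [mul_vecMul_kronecker] at hout ⊢
  rw [relEnt_prod_mul (vecMul_nonneg hp hkl) (vecMul_nonneg hq hk1.nonneg)
    (vecMul_nonneg hq' hl1.nonneg) fun b b' => hout (b, b'), relEnt_prod_mul hp hq hq' hpq,
    sum_vecMul_kronecker p k hl1, mul_add]
  simp only [vecMul_kronecker_slice]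
  gcongr
  · refine hk _ (fun a => Finset.sum_nonneg fun a' _ => hp _) fun a h => ?_
    exact Finset.sum_eq_zero fun a' _ => hpq a a' (by rw [h, zero_mul])
  · calc _ ≤ ∑ b, η * relEnt (kᵀ b ᵥ* Matrix.of (Function.curry p)) q' :=
          Finset.sum_le_sum fun b _ => hl _ (mixture_nonneg b) (mixture_ac b)
      _ ≤ η * ∑ a, relEnt (fun a' => p (a, a')) q' := by
          rw [← Finset.mul_sum]
          exact mul_le_mul_of_nonneg_left (sum_relEnt_vecMul_transpose_le hk1
            (fun a a' => hp (a, a')) hq' fun a' a h => hpq a a' (by rw [h, mul_zero])) hη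

end Contraction

section ChannelPow

variable {A B : Type*} {q : A → ℝ} {k : Matrix A B ℝ} {η : ℝ}

/-- The `d`-fold memoryless product of the channel `k`. -/
def channelPow (k : Matrix A B ℝ) (d : ℕ) : Matrix (Fin d → A) (Fin d → B) ℝ :=
  Matrix.of fun a b => ∏ j, k (a j) (b j)

lemma channelPow_isSymm {n : Matrix A A ℝ} (hn : n.IsSymm) (d : ℕ) : (channelPow n d).IsSymm :=
  Matrix.IsSymm.ext fun a b => by simp only [channelPow, Matrix.of_apply, hn.apply]

lemma channelPow_submatrix_consEquiv (k : Matrix A B ℝ) (d : ℕ) :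
    (channelPow k (d + 1)).submatrix (Fin.consEquiv fun _ => A) (Fin.consEquiv fun _ => B) =
      k ⊗ₖ channelPow k d := by
  ext ⟨a, x⟩ ⟨b, y⟩
  simp [channelPow, Fin.prod_univ_succ]

lemma prod_ac_prod {d : ℕ} {p q : Fin d → B → ℝ} (hpq : ∀ j b, q j b = 0 → p j b = 0)
    (x : Fin d → B) (h : ∏ j, q j (x j) = 0) : ∏ j, p j (x j) = 0 := by
  obtain ⟨j, hj, hqj⟩ := Finset.prod_eq_zero_iff.1 h
  exact Finset.prod_eq_zero hj (hpq j _ hqj)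

variable [Fintype B]

lemma prod_mem_stdSimplex {d : ℕ} {p : Fin d → B → ℝ} (hp : ∀ j, p j ∈ stdSimplex ℝ B) :
    (fun x : Fin d → B => ∏ j, p j (x j)) ∈ stdSimplex ℝ (Fin d → B) := by
  refine ⟨fun x => Finset.prod_nonneg fun j _ => (hp j).1 (x j), ?_⟩
  rw [← Fintype.piFinset_univ, ← Finset.prod_univ_sum]
  exact Finset.prod_eq_one fun j _ => (hp j).2

lemma IsStochastic.channelPow (hk : IsStochastic k) (d : ℕ) : IsStochastic (channelPow k d) :=
  fun a => prod_mem_stdSimplex fun j => hk (a j)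

lemma relEnt_pi {d : ℕ} {p q : Fin d → B → ℝ} (hp : ∀ j, p j ∈ stdSimplex ℝ B)
    (hq : ∀ j, 0 ≤ q j) (hpq : ∀ j b, q j b = 0 → p j b = 0) :
    relEnt (fun x : Fin d → B => ∏ j, p j (x j)) (fun x => ∏ j, q j (x j)) =
      ∑ j, relEnt (p j) (q j) := by
  induction d with
  | zero => simp
  | succ d ih =>
    rw [← relEnt_comp_equiv (Fin.consEquiv fun _ => B), Fin.sum_univ_succ,
      ← ih (fun j => hp j.succ) (fun j => hq j.succ) fun j => hpq j.succ]
    simp only [Function.comp_def, Fin.consEquiv_apply, Fin.prod_univ_succ, Fin.cons_zero,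
      Fin.cons_succ]
    exact relEnt_mul_mul (p' := fun x : Fin d → B => ∏ j, p j.succ (x j))
      (q' := fun x => ∏ j, q j.succ (x j)) (hp 0) (prod_mem_stdSimplex fun j => hp j.succ) (hq 0)
      (fun x => Finset.prod_nonneg fun j _ => hq j.succ (x j)) (hpq 0)
      (prod_ac_prod fun j => hpq j.succ)

variable [Fintype A]

lemma SDPIAt.channelPow (hk : SDPIAt q k η) (hq : 0 ≤ q) (hk1 : IsStochastic k) (hη : 0 ≤ η)
    (d : ℕ) : SDPIAt (fun x : Fin d → A => ∏ j, q (x j)) (channelPow k d) η := by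
  induction d with
  | zero => simp [SDPIAt, relEnt_of_subsingleton]
  | succ d ih =>
    refine .of_submatrix_equiv (Fin.consEquiv fun _ => A) (Fin.consEquiv fun _ => B) ?_
    rw [channelPow_submatrix_consEquiv]
    convert hk.kronecker ih hq (fun x => Finset.prod_nonneg fun j _ => hq (x j)) hk1
      (hk1.channelPow d) hη using 1
    ext x
    simp [Fin.prod_univ_succ]

end ChannelPow

section Feedback

variable {Y B U V : Type*} {F : Matrix Y B ℝ} {k : Matrix U V ℝ} {φ : Y → B → U}

/-- The channel `F` followed by one use of `k`, whose input is determined by `φ` from the input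
of `F` and its (fed back) output. -/
def appendUse (F : Matrix Y B ℝ) (k : Matrix U V ℝ) (φ : Y → B → U) : Matrix Y (B × V) ℝ :=
  Matrix.of fun y x => F y x.1 * k (φ y x.1) x.2

/-- `T` uses of the channel `k` with feedback: the input at time `s` is `φ s y v`, where `y` is the
message and `v` are the outputs at the times before `s`. -/
def feedbackChannel (k : Matrix U V ℝ) (φ : (s : ℕ) → Y → (Fin s → V) → U) (T : ℕ) :
    Matrix Y (Fin T → V) ℝ :=
  Matrix.of fun y v => ∏ s : Fin T, k (φ s y fun i => v (Fin.castLE s.isLt.le i)) (v s)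

lemma feedbackChannel_succ (k : Matrix U V ℝ) (φ : (s : ℕ) → Y → (Fin s → V) → U) (T : ℕ) (y : Y)
    (v : Fin (T + 1) → V) :
    feedbackChannel k φ (T + 1) y v =
      feedbackChannel k φ T y (Fin.init v) * k (φ T y (Fin.init v)) (v (Fin.last T)) :=
  Fin.prod_univ_castSucc _

lemma feedbackChannel_submatrix_snocEquiv (k : Matrix U V ℝ)
    (φ : (s : ℕ) → Y → (Fin s → V) → U) (T : ℕ) :
    (feedbackChannel k φ (T + 1)).submatrix (Equiv.refl Y)
        ((Equiv.prodComm _ _).trans (Fin.snocEquiv fun _ => V)) =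
      appendUse (feedbackChannel k φ T) k (φ T) := by
  ext y ⟨v, z⟩
  have init_snoc : Fin.init (Fin.snocEquiv (fun _ : Fin (T + 1) => V) (z, v)) = v :=
    Fin.init_snoc (α := fun _ : Fin (T + 1) => V) z v
  simp [feedbackChannel_succ, appendUse, init_snoc]

lemma feedbackChannel_eq_channelPow_submatrix (k : Matrix U V ℝ)
    {φ : (s : ℕ) → Y → (Fin s → V) → U} (hφ : ∀ s y v v', φ s y v = φ s y v') (v₀ : V) (T : ℕ) :
    feedbackChannel k φ T = (channelPow k T).submatrix (fun y s => φ s y fun _ => v₀) id := by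
  ext y v
  simp only [feedbackChannel, channelPow, Matrix.of_apply, Matrix.submatrix_apply, id,
    hφ _ _ _ fun _ => v₀]

lemma vecMul_appendUse_slice [Fintype Y] (p : Y → ℝ) (F : Matrix Y B ℝ) (k : Matrix U V ℝ)
    (φ : Y → B → U) (b : B) :
    (fun v => (p ᵥ* appendUse F k φ) (b, v)) =
      (fun y => p y * F y b) ᵥ* k.submatrix (φ · b) id := by
  ext v
  simp only [Matrix.vecMul, dotProduct, appendUse, Matrix.of_apply, Matrix.submatrix_apply, id,
    mul_assoc]

variable [Fintype V]

lemma sum_appendUse (F : Matrix Y B ℝ) (hk : IsStochastic k) (φ : Y → B → U) (y : Y) (b : B) :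
    ∑ v, appendUse F k φ y (b, v) = F y b := by
  simp only [appendUse, Matrix.of_apply, ← Finset.mul_sum, hk.sum_row, mul_one]

lemma appendUse_nonneg (hF : ∀ y, 0 ≤ F y) (hk : IsStochastic k) (φ : Y → B → U) (y : Y) :
    0 ≤ appendUse F k φ y :=
  fun x => mul_nonneg (hF y x.1) (hk.nonneg (φ y x.1) x.2)

lemma IsStochastic.appendUse [Fintype B] (hF : IsStochastic F) (hk : IsStochastic k)
    (φ : Y → B → U) : IsStochastic (appendUse F k φ) := fun y =>
  ⟨appendUse_nonneg hF.nonneg hk φ y, by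
    rw [Fintype.sum_prod_type]
    simp only [sum_appendUse F hk φ, hF.sum_row]⟩

lemma IsStochastic.feedbackChannel (hk : IsStochastic k)
    (φ : (s : ℕ) → Y → (Fin s → V) → U) (T : ℕ) :
    IsStochastic (feedbackChannel k φ T) := by
  induction T with
  | zero => simp [IsStochastic, stdSimplex, DecEst.feedbackChannel]
  | succ T ih =>
    refine .of_submatrix_equiv ((Equiv.prodComm _ _).trans (Fin.snocEquiv fun _ => V)) ?_
    exact feedbackChannel_submatrix_snocEquiv k φ T ▸ ih.appendUse hk (φ T)

variable [Fintype Y]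

lemma sum_vecMul_appendUse (p : Y → ℝ) (F : Matrix Y B ℝ) (hk : IsStochastic k)
    (φ : Y → B → U) : (fun b => ∑ v, (p ᵥ* appendUse F k φ) (b, v)) = p ᵥ* F := by
  ext b
  simp only [Matrix.vecMul, dotProduct]
  rw [Finset.sum_comm]
  simp only [← Finset.mul_sum, sum_appendUse F hk φ]

variable [Fintype B] [Fintype U] {η η' : ℝ}

lemma SDPI.appendUse (hF : SDPI F η') (hF1 : IsStochastic F) (hk : SDPI k η)
    (hk1 : IsStochastic k) (hη0 : 0 ≤ η) (hη1 : η ≤ 1) (φ : Y → B → U) :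
    SDPI (appendUse F k φ) (η + (1 - η) * η') := by
  intro q hq p hp hpq
  have hE := appendUse_nonneg hF1.nonneg hk1 φ
  have slice_nonneg {r : Y → ℝ} (hr : 0 ≤ r) (b : B) : 0 ≤ fun y => r y * F y b :=
    fun y => mul_nonneg (hr y) (hF1.nonneg y b)
  rw [relEnt_prod (vecMul_nonneg hp hE) (vecMul_nonneg hq hE) (vecMul_ac_vecMul hq hpq hE),
    sum_vecMul_appendUse p F hk1, sum_vecMul_appendUse q F hk1]
  simp only [vecMul_appendUse_slice]
  calc _ ≤ relEnt (p ᵥ* F) (q ᵥ* F) +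
        ∑ b, η * relEnt (fun y => p y * F y b) (fun y => q y * F y b) := by
        gcongr with b
        exact hk.submatrix hη0 (φ · b) _ (slice_nonneg hq b) _ (slice_nonneg hp b)
          (mul_ac_mul hpq (F · b))
    _ = η * relEnt p q + (1 - η) * relEnt (p ᵥ* F) (q ᵥ* F) := by
        rw [relEnt_eq_add_sum_posterior hp hq hpq hF1, ← Finset.mul_sum]
        ring
    _ ≤ η * relEnt p q + (1 - η) * (η' * relEnt p q) := by
        gcongr
        exact hF q hq p hp hpq
    _ = _ := by ring

lemma mutualInfo_appendUse_le {c : ℝ} (hk1 : IsStochastic k)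
    (hk : ∀ r : U → ℝ, 0 ≤ r → mutualInfo r k ≤ (∑ u, r u) * c) (hF : IsStochastic F)
    {p : Y → ℝ} (hp : 0 ≤ p) (φ : Y → B → U) :
    mutualInfo p (appendUse F k φ) ≤ mutualInfo p F + (∑ y, p y) * c := by
  have hE := appendUse_nonneg hF.nonneg hk1 φ
  have chain (y : Y) : p y * relEnt (appendUse F k φ y) (p ᵥ* appendUse F k φ) =
      p y * relEnt (F y) (p ᵥ* F) + ∑ b, p y * F y b *
        relEnt (k (φ y b)) ((fun y => p y * F y b) ᵥ* k.submatrix (φ · b) id) := by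
    obtain hy | hy := eq_or_ne (p y) 0
    · simp [hy]
    rw [relEnt_prod (hE y) (vecMul_nonneg hp hE) (row_ac_vecMul hp hE hy),
      sum_vecMul_appendUse p F hk1, mul_add, Finset.mul_sum]
    simp only [sum_appendUse F hk1 φ, vecMul_appendUse_slice, mul_assoc, ← relEnt_smul_left]
    rfl
  have last_use (b : B) : mutualInfo (fun y => p y * F y b) (k.submatrix (φ · b) id) ≤
      (∑ y, p y * F y b) * c := by
    have hf : IsStochastic ((1 : Matrix U U ℝ).submatrix (φ · b) id) :=
      fun y => isStochastic_one (φ y b)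
    rw [mutualInfo_submatrix, ← hf.sum_vecMul]
    exact hk _ (vecMul_nonneg (fun y => mul_nonneg (hp y) (hF.nonneg y b)) hf.nonneg)
  calc mutualInfo p (appendUse F k φ)
      = mutualInfo p F + ∑ b, mutualInfo (fun y => p y * F y b) (k.submatrix (φ · b) id) := by
        simp only [mutualInfo, chain, Finset.sum_add_distrib]
        congr 1
        exact Finset.sum_comm
    _ ≤ mutualInfo p F + ∑ b, (∑ y, p y * F y b) * c := by gcongr; exact last_use _
    _ = mutualInfo p F + (∑ y, p y) * c := by
        rw [← Finset.sum_mul]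
        congr 2
        exact hF.sum_vecMul p

variable (φ : (s : ℕ) → Y → (Fin s → V) → U) (T : ℕ)

lemma SDPI.feedbackChannel (hk : SDPI k η) (hk1 : IsStochastic k) (hη0 : 0 ≤ η) (hη1 : η ≤ 1) :
    SDPI (feedbackChannel k φ T) (1 - (1 - η) ^ T) := by
  induction T with
  | zero => simp [SDPI, SDPIAt, relEnt_of_subsingleton]
  | succ T ih =>
    have h := ih.appendUse (hk1.feedbackChannel φ T) hk hk1 hη0 hη1 (φ T)
    rw [← feedbackChannel_submatrix_snocEquiv] at h
    rw [show 1 - (1 - η) ^ (T + 1) = η + (1 - η) * (1 - (1 - η) ^ T) by ring]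
    exact fun q hq => .of_submatrix_equiv (Equiv.refl Y) _ (h q hq)

lemma mutualInfo_feedbackChannel_le {c : ℝ} (hk1 : IsStochastic k)
    (hk : ∀ r : U → ℝ, 0 ≤ r → mutualInfo r k ≤ (∑ u, r u) * c) {p : Y → ℝ} (hp : 0 ≤ p) :
    mutualInfo p (feedbackChannel k φ T) ≤ T * ((∑ y, p y) * c) := by
  induction T with
  | zero => simp [mutualInfo, relEnt_of_subsingleton]
  | succ T ih =>
    have h := mutualInfo_appendUse_le hk1 hk (hk1.feedbackChannel φ T) hp (φ T)
    rw [← feedbackChannel_submatrix_snocEquiv, Equiv.coe_refl, mutualInfo_submatrix_equiv] at h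
    calc _ ≤ _ := h
      _ ≤ T * ((∑ y, p y) * c) + (∑ y, p y) * c := by gcongr
      _ = (T + 1 : ℕ) * ((∑ y, p y) * c) := by push_cast; ring

end Feedback

section BinarySymmetricChannel

variable {δ m : ℝ}

lemma hasSum_log_two_sub_binEntropy (hm : |m| < 1) :
    HasSum (fun n : ℕ => m ^ (2 * n + 2) / ((2 * n + 1) * (2 * n + 2)))
      (log 2 - binEntropy ((1 + m) / 2)) := by
  have hodd := (hasSum_log_sub_log_of_abs_lt_one hm).mul_left (m / 2)
  have heven := (hasSum_pow_div_log_of_abs_lt_one (x := m ^ 2) (by simpa [abs_pow])).div_const 2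
  obtain ⟨h₁, h₂⟩ := abs_lt.1 hm
  have log_one_sub_sq : log (1 - m ^ 2) = log (1 + m) + log (1 - m) := by
    rw [← log_mul (by linarith) (by linarith)]
    ring_nf
  have value : log 2 - binEntropy ((1 + m) / 2) =
      m / 2 * (log (1 + m) - log (1 - m)) - -log (1 - m ^ 2) / 2 := by
    rw [binEntropy_eq_negMulLog_add_negMulLog_one_sub, negMulLog, negMulLog, log_one_sub_sq,
      show 1 - (1 + m) / 2 = (1 - m) / 2 by ring, log_div (by linarith) two_ne_zero,
      log_div (by linarith) two_ne_zero]
    ring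
  rw [value]
  refine (hodd.sub heven).congr_fun fun n => ?_
  field_simp
  ring

lemma log_two_sub_binEntropy_mul_le (hδ : |δ| ≤ 1) (hm : |m| ≤ 1) :
    log 2 - binEntropy ((1 + δ * m) / 2) ≤ δ ^ 2 * (log 2 - binEntropy ((1 + m) / 2)) := by
  have interior : Set.Ioo (-1 : ℝ) 1 ⊆ {m | log 2 - binEntropy ((1 + δ * m) / 2) ≤
      δ ^ 2 * (log 2 - binEntropy ((1 + m) / 2))} := by
    intro m hm
    have hm : |m| < 1 := abs_lt.2 hm
    have hδm : |δ * m| < 1 := by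
      rw [abs_mul]
      exact (mul_le_of_le_one_left (abs_nonneg m) hδ).trans_lt hm
    refine hasSum_le (fun n => ?_) (hasSum_log_two_sub_binEntropy hδm)
      ((hasSum_log_two_sub_binEntropy hm).mul_left (δ ^ 2))
    have hpow : δ ^ (2 * n + 2) ≤ δ ^ 2 := by
      have : (δ ^ 2) ^ n ≤ 1 := pow_le_one₀ (sq_nonneg δ) ((sq_le_one_iff_abs_le_one δ).2 hδ)
      rw [pow_add, pow_mul]
      exact mul_le_of_le_one_left (sq_nonneg δ) this
    have hmpow : 0 ≤ m ^ (2 * n + 2) := by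
      rw [show 2 * n + 2 = 2 * (n + 1) by ring, pow_mul]
      positivity
    rw [mul_pow, mul_div_assoc]
    gcongr
  have closed := closure_minimal interior (isClosed_le (by fun_prop) (by fun_prop))
  rw [closure_Ioo (by norm_num)] at closed
  exact closed (abs_le.1 hm)

/-- The channel flipping its input bit with probability `(1 - δ) / 2`; `δ` is the correlation of
its input and output under the uniform input law. -/
def bscMatrix (δ : ℝ) : Matrix Bool Bool ℝ :=
  Matrix.of fun a b => if a = b then (1 + δ) / 2 else (1 - δ) / 2

lemma bscMatrix_isSymm (δ : ℝ) : (bscMatrix δ).IsSymm :=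
  Matrix.IsSymm.ext fun a b => by simp only [bscMatrix, Matrix.of_apply, eq_comm]

lemma isStochastic_bscMatrix (hδ : |δ| ≤ 1) : IsStochastic (bscMatrix δ) := by
  obtain ⟨h₁, h₂⟩ := abs_le.1 hδ
  refine fun a => ⟨fun b => ?_, ?_⟩
  · simp only [bscMatrix, Matrix.of_apply]
    split_ifs <;> linarith
  · cases a <;> simp [bscMatrix] <;> ring

lemma relEnt_bool_one {p : Bool → ℝ} (hp : 0 < p true + p false) :
    relEnt p 1 = (p true + p false) *
      (log 2 - binEntropy ((1 + (p true - p false) / (p true + p false)) / 2)) := by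
  have htrue : (1 + (p true - p false) / (p true + p false)) / 2 =
      p true / (p true + p false) := by
    field_simp
    ring
  have hfalse : 1 - p true / (p true + p false) = p false / (p true + p false) := by
    field_simp
    ring
  have term (a : Bool) : p a * log (p a / (p true + p false) * 2) =
      p a * log (p a / (p true + p false)) + p a * log 2 := by
    obtain ha | ha := eq_or_ne (p a) 0
    · simp [ha]
    · rw [log_mul (div_ne_zero ha hp.ne') two_ne_zero, mul_add]
  rw [htrue, binEntropy_eq_negMulLog_add_negMulLog_one_sub, negMulLog, negMulLog, hfalse]
  simp only [relEnt, Fintype.sum_bool, Pi.one_apply, one_add_one_eq_two, div_div_eq_mul_div,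
    div_one, term]
  field_simp
  ring

lemma sdpiAt_one_bscMatrix (hδ : |δ| ≤ 1) : SDPIAt 1 (bscMatrix δ) (δ ^ 2) := by
  intro p hp _
  have one_vecMul : (1 : Bool → ℝ) ᵥ* bscMatrix δ = 1 := by
    ext b
    cases b <;> simp [Matrix.vecMul, dotProduct, bscMatrix] <;> ring
  have htrue : (p ᵥ* bscMatrix δ) true = p true * ((1 + δ) / 2) + p false * ((1 - δ) / 2) := by
    simp [Matrix.vecMul, dotProduct, bscMatrix]
  have hfalse : (p ᵥ* bscMatrix δ) false = p true * ((1 - δ) / 2) + p false * ((1 + δ) / 2) := by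
    simp [Matrix.vecMul, dotProduct, bscMatrix]
  have hsum : (p ᵥ* bscMatrix δ) true + (p ᵥ* bscMatrix δ) false = p true + p false := by
    rw [htrue, hfalse]
    ring
  have htrue0 : 0 ≤ p true := hp true
  have hfalse0 : 0 ≤ p false := hp false
  obtain hp0 | hp0 := (add_nonneg htrue0 hfalse0).eq_or_lt
  · obtain ⟨h₁, h₂⟩ := (add_eq_zero_iff_of_nonneg htrue0 hfalse0).1 hp0.symm
    have : p = 0 := funext (Bool.rec h₂ h₁)
    simp [this]
  have bias_out : ((p ᵥ* bscMatrix δ) true - (p ᵥ* bscMatrix δ) false) / (p true + p false) =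
      δ * ((p true - p false) / (p true + p false)) := by
    rw [htrue, hfalse]
    ring
  have bias_le : |(p true - p false) / (p true + p false)| ≤ 1 := by
    rw [abs_div, abs_of_pos hp0]
    refine div_le_one_of_le₀ (abs_le.2 ⟨?_, ?_⟩) hp0.le <;> linarith
  rw [one_vecMul, relEnt_bool_one (hsum ▸ hp0), relEnt_bool_one hp0, hsum, bias_out, mul_left_comm]
  exact mul_le_mul_of_nonneg_left (log_two_sub_binEntropy_mul_le hδ bias_le) hp0.le

lemma relEnt_bscMatrix_one (hδ : |δ| ≤ 1) (a : Bool) :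
    relEnt (bscMatrix δ a) 1 = log 2 * (1 - binEnt ((1 - δ) / 2)) := by
  have hlog : log 2 ≠ 0 := (log_pos one_lt_two).ne'
  have hsum : bscMatrix δ a true + bscMatrix δ a false = 1 := by
    simpa using (isStochastic_bscMatrix hδ).sum_row a
  have hbin : log 2 * binEnt ((1 - δ) / 2) = binEntropy ((1 - δ) / 2) := by
    rw [binEnt, mul_div_cancel₀ _ hlog, binEntropy_eq_negMulLog_add_negMulLog_one_sub]
  rw [relEnt_bool_one (hsum ▸ one_pos), hsum, one_mul, div_one, mul_sub, hbin, mul_one]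
  congr 1
  cases a
  · simp only [bscMatrix, Matrix.of_apply, Bool.false_eq_true, if_false, if_true]
    ring_nf
  · rw [← binEntropy_one_sub]
    simp only [bscMatrix, Matrix.of_apply, Bool.true_eq_false, if_false, if_true]
    ring_nf

lemma mutualInfo_channelPow_bscMatrix_le (hδ : |δ| ≤ 1) (d : ℕ) {p : (Fin d → Bool) → ℝ}
    (hp : 0 ≤ p) :
    mutualInfo p (channelPow (bscMatrix δ) d) ≤
      (∑ w, p w) * (d * (log 2 * (1 - binEnt ((1 - δ) / 2)))) := by
  have hbsc := isStochastic_bscMatrix hδ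
  have row (w : Fin d → Bool) : relEnt (channelPow (bscMatrix δ) d w) 1 =
      d * (log 2 * (1 - binEnt ((1 - δ) / 2))) := by
    have := relEnt_pi (q := fun _ => 1) (fun j => hbsc (w j)) (fun _ => zero_le_one)
      fun _ _ h => absurd h one_ne_zero
    simp only [relEnt_bscMatrix_one hδ, Pi.one_apply, Finset.prod_const_one, Finset.sum_const,
      Finset.card_univ, Fintype.card_fin, nsmul_eq_mul] at this
    exact this
  refine (mutualInfo_le_sum_mul_relEnt (u := 1) hp (hbsc.channelPow d).nonneg zero_le_one
    fun _ h => absurd h one_ne_zero).trans_eq ?_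
  simp only [row, Finset.sum_mul]

lemma mutualInfo_channelPow_bscMatrix_mul_le (hδ : |δ| ≤ 1) {d : ℕ} {B : Type*} [Fintype B]
    {k : Matrix (Fin d → Bool) B ℝ} (hk : IsStochastic k) {c : ℝ} (hc : 0 ≤ c) :
    mutualInfo (fun _ => c) (channelPow (bscMatrix δ) d * k) ≤
      δ ^ 2 * mutualInfo (fun _ => c) k := by
  have hbsc := isStochastic_bscMatrix hδ
  have hη := (sdpiAt_one_bscMatrix hδ).channelPow zero_le_one hbsc (sq_nonneg δ) d
  simp only [Pi.one_apply, Finset.prod_const_one] at hη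
  exact mutualInfo_mul_le_of_isSymm (hbsc.channelPow d) (channelPow_isSymm (bscMatrix_isSymm δ) d)
    hη hk hc

end BinarySymmetricChannel

section MassFunction

variable {A B : Type*} [MeasurableSpace A] [MeasurableSpace B]

/-- The mass function of a measure; on a finite space whose singletons are measurable it determines
a finite measure. -/
def massFn (ν : Measure A) (a : A) : ℝ := ν.real {a}

/-- The matrix of transition probabilities of a kernel. -/
def kernelMatrix (K : Kernel A B) : Matrix A B ℝ := Matrix.of fun a => massFn (K a)

lemma massFn_nonneg (ν : Measure A) : 0 ≤ massFn ν := fun _ => measureReal_nonneg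

lemma massFn_map_congr [MeasurableSpace Ω] [MeasurableSingletonClass A]
    [MeasurableSingletonClass B] (μ : Measure Ω) {f : Ω → A} {g : Ω → B} (hf : Measurable f)
    (hg : Measurable g) {a : A} {b : B} (h : ∀ ω, f ω = a ↔ g ω = b) :
    massFn (μ.map f) a = massFn (μ.map g) b := by
  rw [massFn, massFn, map_measureReal_apply hf (measurableSet_singleton a),
    map_measureReal_apply hg (measurableSet_singleton b)]
  exact congr_arg μ.real (Set.ext h)

lemma massFn_compProd [MeasurableSingletonClass A] [MeasurableSingletonClass B] (ν : Measure A)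
    [SFinite ν] (K : Kernel A B) [IsSFiniteKernel K] (a : A) (b : B) :
    massFn (ν ⊗ₘ K) (a, b) = massFn ν a * kernelMatrix K a b := by
  rw [massFn, ← Set.singleton_prod_singleton, Measure.real,
    Measure.compProd_apply_prod (measurableSet_singleton a) (measurableSet_singleton b),
    lintegral_singleton, ENNReal.toReal_mul, mul_comm]
  rfl

lemma massFn_map_prodMk [MeasurableSpace Ω] [MeasurableSingletonClass A]
    [MeasurableSingletonClass B] [StandardBorelSpace B] [Nonempty B] {μ : Measure Ω}
    [IsFiniteMeasure μ] {Z : Ω → A} {Y : Ω → B} (hY : Measurable Y) {κ : A → Measure B}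
    (hκ : ∀ᵐ z ∂(μ.map Z), condDistrib Y Z μ z = κ z) (a : A) (b : B) :
    massFn (μ.map fun ω => (Z ω, Y ω)) (a, b) = massFn (μ.map Z) a * massFn (κ a) b := by
  rw [← compProd_map_condDistrib hY.aemeasurable, massFn_compProd]
  obtain ha | ha := eq_or_ne (μ.map Z {a}) 0
  · simp [massFn, Measure.real, ha]
  · have : condDistrib Y Z μ a = κ a :=
      by_contra fun hne => ha (measure_mono_null (Set.singleton_subset_iff.2 hne) hκ)
    rw [← this]
    rfl

lemma absolutelyContinuous_iff_massFn [Countable A] {ν m : Measure A} [IsFiniteMeasure ν]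
    [IsFiniteMeasure m] : ν ≪ m ↔ ∀ a, massFn m a = 0 → massFn ν a = 0 := by
  simp only [massFn, Measure.real, ENNReal.toReal_eq_zero_iff, measure_ne_top, or_false]
  refine ⟨fun h a ha => h ha, fun h => Measure.AbsolutelyContinuous.mk fun s _ hs => ?_⟩
  rw [← Set.biUnion_of_singleton s]
  exact (measure_biUnion_null_iff s.to_countable).2 fun a ha =>
    h a (measure_mono_null (Set.singleton_subset_iff.2 ha) hs)

lemma massFn_pi {d : ℕ} (ν : Fin d → Measure A) [∀ j, IsFiniteMeasure (ν j)] (x : Fin d → A) :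
    massFn (Measure.pi ν) x = ∏ j, massFn (ν j) (x j) := by
  rw [massFn, Measure.real, Measure.pi_singleton, ENNReal.toReal_prod]
  rfl

lemma massFn_map_fst [MeasurableSingletonClass A] [Fintype B]
    [MeasurableSingletonClass B] (J : Measure (A × B)) [IsFiniteMeasure J] (a : A) :
    massFn (J.map Prod.fst) a = ∑ b, massFn J (a, b) := by
  have : (Prod.fst ⁻¹' {a} : Set (A × B)) = Finset.univ.map (Function.Embedding.sectR a B) := by
    ext ⟨a', b⟩
    simp [eq_comm]
  rw [massFn, map_measureReal_apply measurable_fst (measurableSet_singleton a), this,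
    ← sum_measureReal_singleton, Finset.sum_map]
  rfl

lemma massFn_map_snd [Fintype A] [MeasurableSingletonClass A] [MeasurableSingletonClass B]
    (J : Measure (A × B)) [IsFiniteMeasure J] (b : B) :
    massFn (J.map Prod.snd) b = ∑ a, massFn J (a, b) := by
  rw [show (Prod.snd : A × B → B) = Prod.fst ∘ Prod.swap from rfl,
    ← Measure.map_map measurable_fst measurable_swap, massFn_map_fst]
  refine Finset.sum_congr rfl fun a _ => ?_
  rw [massFn, map_measureReal_apply measurable_swap (measurableSet_singleton _)]
  exact congr_arg J.real (Set.ext fun x => by simp [Prod.ext_iff, and_comm])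

variable [Fintype A] [MeasurableSingletonClass A]

lemma sum_massFn (ν : Measure A) [IsProbabilityMeasure ν] : ∑ a, massFn ν a = 1 := by
  simp [massFn]

lemma exists_massFn_eq {p : A → ℝ} (hp : p ∈ stdSimplex ℝ A) :
    ∃ ν : Measure A, IsProbabilityMeasure ν ∧ massFn ν = p := by
  have hsum : ∑ a, ENNReal.ofReal (p a) = 1 := by
    rw [← ENNReal.ofReal_sum_of_nonneg fun a _ => hp.1 a, hp.2, ENNReal.ofReal_one]
  refine ⟨(PMF.ofFintype _ hsum).toMeasure, inferInstance, funext fun a => ?_⟩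
  rw [massFn, Measure.real, PMF.toMeasure_apply_singleton _ _ (measurableSet_singleton a),
    PMF.ofFintype_apply, ENNReal.toReal_ofReal (hp.1 a)]

lemma massFn_bind [MeasurableSingletonClass B] (ν : Measure A) [IsFiniteMeasure ν] (K : Kernel A B)
    [IsFiniteKernel K] : massFn (ν.bind K) = massFn ν ᵥ* kernelMatrix K := by
  ext b
  rw [massFn, Measure.real, Measure.bind_apply (measurableSet_singleton b) K.aemeasurable,
    lintegral_fintype, ENNReal.toReal_sum fun a _ =>
      ENNReal.mul_ne_top (measure_ne_top _ _) (measure_ne_top _ _)]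
  refine Finset.sum_congr rfl fun a _ => ?_
  rw [ENNReal.toReal_mul, mul_comm]
  rfl

lemma klDiv2_eq_ofReal_relEnt {ν m : Measure A} [IsProbabilityMeasure ν] [IsProbabilityMeasure m]
    (h : ν ≪ m) : klDiv2 ν m = ENNReal.ofReal (relEnt (massFn ν) (massFn m) / log 2) := by
  have rnDeriv_eq (a : A) (ha : m {a} ≠ 0) :
      (ν.rnDeriv m a).toReal = massFn ν a / massFn m a := by
    have : ν {a} = ν.rnDeriv m a * m {a} := by
      conv_lhs => rw [← Measure.withDensity_rnDeriv_eq ν m h]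
      rw [withDensity_apply _ (measurableSet_singleton a), lintegral_singleton]
    rw [massFn, massFn, Measure.real, Measure.real, this, ENNReal.toReal_mul,
      mul_div_cancel_right₀ _ (ENNReal.toReal_ne_zero.2 ⟨ha, measure_ne_top _ _⟩)]
  rw [klDiv2, if_pos ⟨h, Integrable.of_finite⟩, integral_fintype Integrable.of_finite, relEnt,
    sum_massFn, sum_massFn, Finset.sum_div]
  congr 1
  refine Finset.sum_congr rfl fun a _ => ?_
  obtain ha | ha := eq_or_ne (m {a}) 0
  · simp [massFn, Measure.real, h ha]
  · rw [rnDeriv_eq a ha, smul_eq_mul, logb, div_one, div_one, mul_div_assoc]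
    rfl

variable [Fintype B] [MeasurableSingletonClass B]

lemma isStochastic_kernelMatrix {C : Type*} [MeasurableSpace C] (K : Kernel C B)
    [IsMarkovKernel K] : IsStochastic (kernelMatrix K) :=
  fun c => ⟨massFn_nonneg (K c), sum_massFn (K c)⟩

lemma toReal_miM_eq_mutualInfo_div {J : Measure (A × B)} [IsProbabilityMeasure J] {p : A → ℝ}
    {k : Matrix A B ℝ} (hk : IsStochastic k) (hJ : ∀ a b, massFn J (a, b) = p a * k a b) :
    (miM J).toReal = mutualInfo p k / log 2 := by
  have := Measure.isProbabilityMeasure_map (μ := J) measurable_fst.aemeasurable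
  have := Measure.isProbabilityMeasure_map (μ := J) measurable_snd.aemeasurable
  have fst_eq : massFn (J.map Prod.fst) = p := by
    ext a
    simp only [massFn_map_fst, hJ, ← Finset.mul_sum, hk.sum_row, mul_one]
  have snd_eq : massFn (J.map Prod.snd) = p ᵥ* k := by
    ext b
    simp only [massFn_map_snd, hJ]
    rfl
  have prod_eq : massFn ((J.map Prod.fst).prod (J.map Prod.snd)) =
      fun x => p x.1 * (p ᵥ* k) x.2 := by
    ext ⟨a, b⟩
    rw [massFn, ← Set.singleton_prod_singleton, measureReal_prod_prod, ← snd_eq, ← fst_eq]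
    rfl
  have hp : 0 ≤ p := fst_eq ▸ massFn_nonneg _
  have hpk : 0 ≤ p ᵥ* k := vecMul_nonneg hp hk.nonneg
  have hac (a : A) (b : B) (h : p a * (p ᵥ* k) b = 0) : massFn J (a, b) = 0 := by
    rw [hJ]
    obtain h | h := mul_eq_zero.1 h
    · rw [h, zero_mul]
    · exact mul_eq_zero_of_vecMul_eq_zero hp hk.nonneg h a
  have hJac : J ≪ (J.map Prod.fst).prod (J.map Prod.snd) :=
    absolutelyContinuous_iff_massFn.2 fun x => by rw [prod_eq]; exact hac x.1 x.2
  have relEnt_eq : relEnt (massFn J) (fun x => p x.1 * (p ᵥ* k) x.2) = mutualInfo p k := by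
    rw [relEnt_prod_mul (massFn_nonneg J) hp hpk hac]
    simp only [hJ, ← Finset.mul_sum, hk.sum_row, mul_one, relEnt_self, zero_add]
    exact Finset.sum_congr rfl fun a _ => relEnt_smul_left (p a) (k a) _
  rw [miM, klDiv2_eq_ofReal_relEnt hJac, prod_eq, relEnt_eq, ENNReal.toReal_ofReal]
  exact div_nonneg (mutualInfo_nonneg hp hk.nonneg) (log_pos one_lt_two).le

end MassFunction

section ChannelConstants

lemma exists_mem_stdSimplex_smul_eq {A : Type*} [Fintype A] {p : A → ℝ} (hp : 0 ≤ p)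
    (hp0 : p ≠ 0) : ∃ p' ∈ stdSimplex ℝ A, (∑ a, p a) • p' = p := by
  obtain ⟨a, ha⟩ := Function.ne_iff.1 hp0
  have hsum : 0 < ∑ a, p a := sum_pos_of_pos hp ((hp a).lt_of_ne' ha)
  exact ⟨(∑ a, p a)⁻¹ • p, ⟨smul_nonneg (inv_nonneg.2 hsum.le) hp,
    by simp [← Finset.mul_sum, hsum.ne']⟩, smul_inv_smul₀ hsum.ne' p⟩

variable {A B : Type*} [MeasurableSpace A] [MeasurableSpace B] [MeasurableSingletonClass A]
  [MeasurableSingletonClass B] (K : Kernel A B) [IsMarkovKernel K]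

lemma klDiv2_bind_eq [Fintype A] [Fintype B] {ν m : Measure A} [IsProbabilityMeasure ν]
    [IsProbabilityMeasure m] (h : ν ≪ m) : klDiv2 (ν.bind K) (m.bind K) = ENNReal.ofReal
      (relEnt (massFn ν ᵥ* kernelMatrix K) (massFn m ᵥ* kernelMatrix K) / log 2) := by
  have hbind : ν.bind K ≪ m.bind K := absolutelyContinuous_iff_massFn.2 <| by
    rw [massFn_bind, massFn_bind]
    exact vecMul_ac_vecMul (massFn_nonneg m) (absolutelyContinuous_iff_massFn.1 h)
      (isStochastic_kernelMatrix K).nonneg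
  rw [klDiv2_eq_ofReal_relEnt hbind, massFn_bind, massFn_bind]

lemma klDiv2_bind_le [Finite A] [Finite B] (ν m : Measure A) [IsProbabilityMeasure ν]
    [IsProbabilityMeasure m] : klDiv2 (ν.bind K) (m.bind K) ≤ klDiv2 ν m := by
  have := Fintype.ofFinite A
  have := Fintype.ofFinite B
  by_cases h : ν ≪ m
  · rw [klDiv2_bind_eq K h, klDiv2_eq_ofReal_relEnt h]
    have := relEnt_vecMul_le (massFn_nonneg ν) (massFn_nonneg m)
      (absolutelyContinuous_iff_massFn.1 h) (isStochastic_kernelMatrix K)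
    gcongr
  · rw [klDiv2.eq_def ν m, if_neg fun h' => h h'.1]
    exact le_top

lemma etaMax_le_one [Finite A] [Finite B] : etaMax K ≤ 1 :=
  iSup₂_le fun m _ => iSup₂_le fun ν _ => iSup_le fun _ =>
    ENNReal.div_le_of_le_mul (by rw [one_mul]; exact klDiv2_bind_le K ν m)

lemma toReal_etaMax_le_one [Finite A] [Finite B] : (etaMax K).toReal ≤ 1 :=
  ENNReal.toReal_le_of_le_ofReal zero_le_one (by simpa using etaMax_le_one K)

lemma klDiv2_bind_le_etaMax_mul [Finite A] [Finite B] {ν m : Measure A}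
    [IsProbabilityMeasure ν] [IsProbabilityMeasure m] (h : ν ≪ m) :
    klDiv2 (ν.bind K) (m.bind K) ≤ etaMax K * klDiv2 ν m := by
  have := Fintype.ofFinite A
  obtain hzero | hzero := eq_or_ne (klDiv2 ν m) 0
  · rw [hzero, mul_zero, ← hzero]
    exact klDiv2_bind_le K ν m
  have hne : ν ≠ m := by
    rintro rfl
    simp [klDiv2_eq_ofReal_relEnt h] at hzero
  have htop : klDiv2 ν m ≠ ⊤ := by
    rw [klDiv2_eq_ofReal_relEnt h]
    exact ENNReal.ofReal_ne_top
  rw [← ENNReal.div_le_iff hzero htop]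
  exact le_iSup₂_of_le (f := fun m _ => eta m K) m ‹_› <|
    le_iSup₂_of_le ν ‹_› <| le_iSup_of_le hne le_rfl

lemma toReal_miM_compProd [Fintype A] [Fintype B] (ν : Measure A) [IsProbabilityMeasure ν] :
    (miM (ν ⊗ₘ K)).toReal = mutualInfo (massFn ν) (kernelMatrix K) / log 2 :=
  toReal_miM_eq_mutualInfo_div (isStochastic_kernelMatrix K) (massFn_compProd ν K)

lemma bddAbove_range_toReal_miM_compProd [Finite A] [Finite B] : BddAbove
    (Set.range fun ν : ProbabilityMeasure A => (miM ((ν : Measure A) ⊗ₘ K)).toReal) := by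
  have := Fintype.ofFinite A
  have := Fintype.ofFinite B
  refine ⟨log (Fintype.card B) / log 2, ?_⟩
  rintro _ ⟨ν, rfl⟩
  have := mutualInfo_le_log_card (massFn_nonneg (ν : Measure A)) (isStochastic_kernelMatrix K)
  rw [sum_massFn, one_mul] at this
  simp only [toReal_miM_compProd]
  gcongr

variable [Fintype A] [Fintype B]

lemma relEnt_vecMul_le_etaMax_mul {ν m : Measure A} [IsProbabilityMeasure ν]
    [IsProbabilityMeasure m] (h : ∀ a, massFn m a = 0 → massFn ν a = 0) :
    relEnt (massFn ν ᵥ* kernelMatrix K) (massFn m ᵥ* kernelMatrix K) ≤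
      (etaMax K).toReal * relEnt (massFn ν) (massFn m) := by
  have hac : ν ≪ m := absolutelyContinuous_iff_massFn.2 h
  have hlog := log_pos one_lt_two
  have hη : etaMax K ≠ ⊤ := ((etaMax_le_one K).trans_lt ENNReal.one_lt_top).ne
  have hrel := relEnt_nonneg (massFn_nonneg ν) (massFn_nonneg m) h
  have hle := klDiv2_bind_le_etaMax_mul K hac
  rwa [klDiv2_bind_eq K hac, klDiv2_eq_ofReal_relEnt hac, ← ENNReal.ofReal_toReal hη,
    ← ENNReal.ofReal_mul ENNReal.toReal_nonneg, ENNReal.ofReal_le_ofReal_iff (by positivity),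
    ← mul_div_assoc, div_le_div_iff_of_pos_right hlog] at hle

lemma sdpi_kernelMatrix_etaMax : SDPI (kernelMatrix K) (etaMax K).toReal := by
  intro q hq p hp hpq
  obtain rfl | hp0 := eq_or_ne p 0
  · simp
  have hq0 : q ≠ 0 := fun h => hp0 (funext fun a => hpq a (congr_fun h a))
  obtain ⟨p', hp', hpp'⟩ := exists_mem_stdSimplex_smul_eq hp hp0
  obtain ⟨q', hq', hqq'⟩ := exists_mem_stdSimplex_smul_eq hq hq0
  have hsump : ∑ a, p a ≠ 0 := fun h => hp0 (by rw [← hpp', h, zero_smul])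
  have hsumq : ∑ a, q a ≠ 0 := fun h => hq0 (by rw [← hqq', h, zero_smul])
  have normalized : relEnt (p' ᵥ* kernelMatrix K) (q' ᵥ* kernelMatrix K) ≤
      (etaMax K).toReal * relEnt p' q' := by
    have hp'q' (a : A) (h : q' a = 0) : p' a = 0 := by
      have := hpq a (by rw [← hqq', Pi.smul_apply, h, smul_zero])
      rw [← hpp', Pi.smul_apply, smul_eq_mul] at this
      exact (mul_eq_zero.1 this).resolve_left hsump
    obtain ⟨ν, _, rfl⟩ := exists_massFn_eq hp'
    obtain ⟨m, _, rfl⟩ := exists_massFn_eq hq'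
    exact relEnt_vecMul_le_etaMax_mul K hp'q'
  rw [← hpp', ← hqq', Matrix.smul_vecMul, Matrix.smul_vecMul,
    relEnt_smul_right (absurd · hsumq), relEnt_smul_right (absurd · hsumq), relEnt_smul_left,
    relEnt_smul_left, mul_left_comm]
  gcongr
  exact Finset.sum_nonneg fun a _ => hp a

lemma mutualInfo_kernelMatrix_le_capacity {p : A → ℝ} (hp : 0 ≤ p) :
    mutualInfo p (kernelMatrix K) ≤ (∑ a, p a) * (capacity K * log 2) := by
  obtain rfl | hp0 := eq_or_ne p 0
  · simp [mutualInfo]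
  obtain ⟨p', hp', hpp'⟩ := exists_mem_stdSimplex_smul_eq hp hp0
  have normalized : mutualInfo p' (kernelMatrix K) ≤ capacity K * log 2 := by
    obtain ⟨ν, hν, rfl⟩ := exists_massFn_eq hp'
    have := le_ciSup (bddAbove_range_toReal_miM_compProd K) ⟨ν, hν⟩
    rwa [ProbabilityMeasure.coe_mk, toReal_miM_compProd, div_le_iff₀ (log_pos one_lt_two)] at this
  calc mutualInfo p (kernelMatrix K) = (∑ a, p a) * mutualInfo p' (kernelMatrix K) := by
        rw [← mutualInfo_smul, hpp']
    _ ≤ (∑ a, p a) * (capacity K * log 2) :=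
        mul_le_mul_of_nonneg_left normalized (Finset.sum_nonneg fun a _ => hp a)

end ChannelConstants

section MemorylessProduct

variable {A B : Type*} [MeasurableSpace A] [MeasurableSpace B] [MeasurableSingletonClass A]
  (T : ℕ) (K : Kernel A B) [IsMarkovKernel K]

instance [Countable A] : IsMarkovKernel (kernelPi T K) :=
  ⟨fun u => inferInstanceAs (IsProbabilityMeasure (Measure.pi fun t => K (u t)))⟩

lemma kernelMatrix_kernelPi [Countable A] :
    kernelMatrix (kernelPi T K) = channelPow (kernelMatrix K) T := by
  ext u v
  exact massFn_pi (fun t => K (u t)) v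

variable {Y : Type*} [Fintype Y] [Finite A] [Fintype B] [MeasurableSingletonClass B]

lemma sdpi_feedbackChannel_of_etaMax (φ : (s : ℕ) → Y → (Fin s → B) → A) :
    SDPI (feedbackChannel (kernelMatrix K) φ T) (1 - (1 - (etaMax K).toReal) ^ T) :=
  have := Fintype.ofFinite A
  (sdpi_kernelMatrix_etaMax K).feedbackChannel φ T (isStochastic_kernelMatrix K)
    ENNReal.toReal_nonneg (toReal_etaMax_le_one K)

lemma sdpi_feedbackChannel_of_etaMax_kernelPi [Nonempty B]
    {φ : (s : ℕ) → Y → (Fin s → B) → A} (hφ : ∀ s y v v', φ s y v = φ s y v') :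
    SDPI (feedbackChannel (kernelMatrix K) φ T) (etaMax (kernelPi T K)).toReal := by
  have := Fintype.ofFinite A
  rw [feedbackChannel_eq_channelPow_submatrix _ hφ (Classical.arbitrary B), ← kernelMatrix_kernelPi]
  exact (sdpi_kernelMatrix_etaMax (kernelPi T K)).submatrix ENNReal.toReal_nonneg _

end MemorylessProduct

section JointLaw

variable [MeasurableSpace Ω] {μ : Measure Ω} {δ : ℝ}

lemma massFn_bsc (hδ : |δ| ≤ 1) (w : Bool) : massFn (bsc ((1 - δ) / 2) w) = bscMatrix δ w := by
  obtain ⟨h₁, h₂⟩ := abs_le.1 hδ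
  ext x
  change ((ENNReal.ofReal ((1 - δ) / 2)) • Measure.dirac (!w) +
    (ENNReal.ofReal (1 - (1 - δ) / 2)) • Measure.dirac w).real {x} = _
  have hflip : 0 ≤ (1 - δ) / 2 := by linarith
  have hkeep : 1 - (1 - δ) / 2 = (1 + δ) / 2 := by ring
  have hkeep0 : 0 ≤ (1 + δ) / 2 := by linarith
  cases w <;> cases x <;> simp [bscMatrix, Measure.real, hkeep, hflip, hkeep0]

instance (ε : ℝ) (w : Bool) : IsFiniteMeasure (bsc ε w) := by
  have hflip := Measure.smul_finite (Measure.dirac !w) (c := .ofReal ε) ENNReal.ofReal_ne_top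
  have hkeep := Measure.smul_finite (Measure.dirac w) (c := .ofReal (1 - ε)) ENNReal.ofReal_ne_top
  exact isFiniteMeasureAdd

instance (p : ℝ) : IsFiniteMeasure (bern p) := by
  have htrue := Measure.smul_finite (Measure.dirac true) (c := .ofReal p) ENNReal.ofReal_ne_top
  have hfalse :=
    Measure.smul_finite (Measure.dirac false) (c := .ofReal (1 - p)) ENNReal.ofReal_ne_top
  exact isFiniteMeasureAdd

lemma massFn_bern_half (w : Bool) : massFn (bern (1 / 2)) w = 1 / 2 := by
  cases w <;> simp [massFn, bern, Measure.real]; norm_num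

lemma massFn_pi_bern_half {d : ℕ} (w : Fin d → Bool) :
    massFn (Measure.pi fun _ : Fin d => bern (1 / 2)) w = (1 / 2) ^ d := by
  rw [massFn_pi]
  simp only [massFn_bern_half, Finset.prod_const, Finset.card_univ, Fintype.card_fin]

lemma massFn_map_prodMk_bsc [IsFiniteMeasure μ] (hδ : |δ| ≤ 1) {d : ℕ} {W X : Ω → Fin d → Bool}
    (hX : Measurable X) (hPrior : μ.map W = Measure.pi fun _ : Fin d => bern (1 / 2))
    (hSample : ∀ᵐ w ∂(μ.map W),
      condDistrib X W μ w = Measure.pi fun j : Fin d => bsc ((1 - δ) / 2) (w j))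
    (w x : Fin d → Bool) :
    massFn (μ.map fun ω => (W ω, X ω)) (w, x) = (1 / 2) ^ d * channelPow (bscMatrix δ) d w x := by
  rw [massFn_map_prodMk hX hSample, hPrior, massFn_pi_bern_half, massFn_pi]
  simp only [massFn_bsc hδ]
  rfl

variable {A Y U' V' : Type*} [MeasurableSpace A] [MeasurableSingletonClass A]
  [MeasurableSpace Y] [MeasurableSingletonClass Y] [MeasurableSpace U']
  [MeasurableSingletonClass U'] [MeasurableSpace V'] [MeasurableSingletonClass V'] [Nonempty V']
  {K : Kernel U' V'} {T : ℕ} {W : Ω → A} {X : Ω → Y} {U : ℕ → Ω → U'} {V : ℕ → Ω → V'}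
  {φ : (t : ℕ) → Y → (Fin t → V') → U'}

lemma massFn_map_history [Countable V'] [IsFiniteMeasure μ] (hW : Measurable W)
    (hX : Measurable X) (hU : ∀ t, Measurable (U t)) (hV : ∀ t, Measurable (V t))
    (hEnc : ∀ t, t < T → ∀ ω, U t ω = φ t (X ω) fun s : Fin t => V s ω)
    (hChannel : ∀ t, t < T →
      ∀ᵐ p ∂(μ.map fun ω => ((W ω, X ω, fun s : Fin t => V s ω), U t ω)),
        condDistrib (V t) (fun ω => ((W ω, X ω, fun s : Fin t => V s ω), U t ω)) μ p = K p.2)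
    (w : A) (x : Y) {t : ℕ} (ht : t ≤ T) (v : Fin t → V') :
    massFn (μ.map fun ω => (W ω, X ω, fun s : Fin t => V s ω)) (w, x, v) =
      massFn (μ.map fun ω => (W ω, X ω)) (w, x) * feedbackChannel (kernelMatrix K) φ t x v := by
  have history (t : ℕ) : Measurable fun ω => (W ω, X ω, fun s : Fin t => V s ω) :=
    hW.prodMk (hX.prodMk (measurable_pi_lambda _ fun s : Fin t => hV s))
  induction t with
  | zero =>
    rw [massFn_map_congr μ (history 0) (hW.prodMk hX) (b := (w, x))]
    · simp [feedbackChannel]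
    · simp [Subsingleton.elim _ v]
  | succ t ih =>
    have withInput := (history t).prodMk (hU t)
    have input_determined (ω : Ω) :
        ((W ω, X ω, fun s : Fin t => V s ω), U t ω) =
          ((w, x, Fin.init v), φ t x (Fin.init v)) ↔
        (W ω, X ω, fun s : Fin t => V s ω) = (w, x, Fin.init v) := by
      simp only [Prod.mk.injEq, hEnc t ht ω, and_iff_left_iff_imp]
      rintro ⟨-, rfl, hv⟩
      rw [hv]
    have split_last (ω : Ω) : (W ω, X ω, fun s : Fin (t + 1) => V s ω) = (w, x, v) ↔
        (((W ω, X ω, fun s : Fin t => V s ω), U t ω), V t ω) =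
          (((w, x, Fin.init v), φ t x (Fin.init v)), v (Fin.last t)) := by
      rw [Prod.mk_inj (a₁ := (_, U t ω)), input_determined]
      simp only [Prod.mk.injEq, and_assoc, funext_iff, Fin.forall_fin_succ', Fin.init,
        Fin.val_castSucc, Fin.val_last]
    rw [massFn_map_congr μ (history (t + 1)) (withInput.prodMk (hV t)) split_last,
      massFn_map_prodMk (hV t) (hChannel t ht),
      massFn_map_congr μ withInput (history t) input_determined, ih (Nat.le_of_succ_le ht),
      feedbackChannel_succ, mul_assoc]
    rfl

variable [Fintype A] [Fintype Y]

lemma mi_eq_mutualInfo_mul_feedbackChannel_div [Fintype V'] [IsProbabilityMeasure μ]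
    [IsMarkovKernel K] (hW : Measurable W) (hX : Measurable X)
    (hU : ∀ t, Measurable (U t)) (hV : ∀ t, Measurable (V t)) {p : A → ℝ} {n : Matrix A Y ℝ}
    (hn : IsStochastic n) (hWX : ∀ w x, massFn (μ.map fun ω => (W ω, X ω)) (w, x) = p w * n w x)
    (hEnc : ∀ t, t < T → ∀ ω, U t ω = φ t (X ω) fun s : Fin t => V s ω)
    (hChannel : ∀ t, t < T →
      ∀ᵐ p ∂(μ.map fun ω => ((W ω, X ω, fun s : Fin t => V s ω), U t ω)),
        condDistrib (V t) (fun ω => ((W ω, X ω, fun s : Fin t => V s ω), U t ω)) μ p = K p.2) :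
    mi μ W (fun ω (t : Fin T) => V t ω) =
      mutualInfo p (n * feedbackChannel (kernelMatrix K) φ T) / log 2 := by
  have hVT : Measurable fun ω (t : Fin T) => V t ω := measurable_pi_lambda _ fun t => hV t
  have := Measure.isProbabilityMeasure_map (μ := μ) (hW.prodMk hVT).aemeasurable
  refine toReal_miM_eq_mutualInfo_div
    (hn.mul ((isStochastic_kernelMatrix K).feedbackChannel φ T)) fun w v => ?_
  have hWVX := (hW.prodMk hVT).prodMk hX
  have reorder (x : Y) (ω : Ω) : ((W ω, fun t : Fin T => V t ω), X ω) = ((w, v), x) ↔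
      (W ω, X ω, fun t : Fin T => V t ω) = (w, x, v) := by
    simp only [Prod.mk.injEq]
    tauto
  calc massFn (μ.map fun ω => (W ω, fun t : Fin T => V t ω)) (w, v)
      = ∑ x, massFn (μ.map fun ω => ((W ω, fun t : Fin T => V t ω), X ω)) ((w, v), x) := by
        rw [← massFn_map_fst, Measure.map_map measurable_fst hWVX]
        rfl
    _ = ∑ x, p w * n w x * feedbackChannel (kernelMatrix K) φ T x v :=
        Finset.sum_congr rfl fun x _ => by
          rw [massFn_map_congr μ hWVX (hW.prodMk (hX.prodMk hVT)) (reorder x),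
            massFn_map_history hW hX hU hV hEnc hChannel w x le_rfl, hWX]
    _ = p w * (n * feedbackChannel (kernelMatrix K) φ T) w v := by
        simp only [Matrix.mul_apply, Finset.mul_sum, mul_assoc]

end JointLaw

section UniformPrior

variable {d : ℕ} {δ η : ℝ}

lemma sum_half_pow (d : ℕ) : ∑ _w : Fin d → Bool, (1 / 2 : ℝ) ^ d = 1 := by
  simp

lemma mutualInfo_bsc_mul_le_of_sdpi {B : Type*} [Fintype B] {k : Matrix (Fin d → Bool) B ℝ}
    (hδ : |δ| ≤ 1) (hη : 0 ≤ η) (hk : SDPI k η) :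
    mutualInfo (fun _ => (1 / 2) ^ d) (channelPow (bscMatrix δ) d * k) ≤
      η * (d * (log 2 * (1 - binEnt ((1 - δ) / 2)))) := by
  have hprior : (0 : (Fin d → Bool) → ℝ) ≤ fun _ => (1 / 2) ^ d := fun _ => by positivity
  have hsource := mutualInfo_channelPow_bscMatrix_le hδ d hprior
  rw [sum_half_pow, one_mul] at hsource
  exact (hk.mutualInfo_mul_le hprior ((isStochastic_bscMatrix hδ).channelPow d).nonneg).trans
    (mul_le_mul_of_nonneg_left hsource hη)

lemma mutualInfo_bsc_mul_submatrix_le_of_sdpi {M B : Type*} [Fintype M] [Fintype B]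
    {k : Matrix M B ℝ} (hδ : |δ| ≤ 1) (hη : 0 ≤ η) (hk : SDPI k η) (f : (Fin d → Bool) → M) :
    mutualInfo (fun _ => (1 / 2) ^ d) (channelPow (bscMatrix δ) d * k.submatrix f id) ≤
      η * (δ ^ 2 * log (Fintype.card M)) := by
  have hprior : (0 : (Fin d → Bool) → ℝ) ≤ fun _ => (1 / 2) ^ d := fun _ => by positivity
  have hf : IsStochastic ((1 : Matrix M M ℝ).submatrix f id) := fun x => isStochastic_one (f x)
  have hbsc := (isStochastic_bscMatrix hδ).channelPow d
  have hmessage := mutualInfo_le_log_card hprior hf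
  rw [sum_half_pow, one_mul] at hmessage
  rw [← submatrix_one_mul, ← Matrix.mul_assoc]
  refine (hk.mutualInfo_mul_le hprior (hbsc.mul hf).nonneg).trans ?_
  gcongr
  refine (mutualInfo_channelPow_bscMatrix_mul_le hδ hf (by positivity)).trans ?_
  gcongr

lemma mutualInfo_bsc_mul_feedbackChannel_le {U V : Type*} [Fintype U] [Fintype V]
    {k : Matrix U V ℝ} {c : ℝ} (hδ : |δ| ≤ 1) (hk1 : IsStochastic k)
    (hk : ∀ r : U → ℝ, 0 ≤ r → mutualInfo r k ≤ (∑ u, r u) * c)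
    (φ : (s : ℕ) → (Fin d → Bool) → (Fin s → V) → U) (T : ℕ) :
    mutualInfo (fun _ => (1 / 2) ^ d) (channelPow (bscMatrix δ) d * feedbackChannel k φ T) ≤
      δ ^ 2 * (T * c) := by
  have hprior : (0 : (Fin d → Bool) → ℝ) ≤ fun _ => (1 / 2) ^ d := fun _ => by positivity
  have hchannel := mutualInfo_feedbackChannel_le φ T hk1 hk hprior
  rw [sum_half_pow, one_mul] at hchannel
  exact (mutualInfo_channelPow_bscMatrix_mul_le hδ (hk1.feedbackChannel φ T)
    (by positivity)).trans (mul_le_mul_of_nonneg_left hchannel (sq_nonneg δ))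

end UniformPrior

theorem discrete_param_mi_upper_bound_general
    {Ω U' V' M : Type*} [MeasurableSpace Ω] [Fintype M]
    [MeasurableSpace U'] [Finite U'] [MeasurableSingletonClass U']
    [MeasurableSpace V'] [Finite V'] [MeasurableSingletonClass V'] [Nonempty V']
    (μ : Measure Ω) [IsProbabilityMeasure μ]
    (K : Kernel U' V') [IsMarkovKernel K]
    (d T : ℕ) (δ : ℝ) (hδ : |δ| ≤ 1)
    (W X : Ω → Fin d → Bool) (U : ℕ → Ω → U') (V : ℕ → Ω → V')
    (hW : Measurable W) (hX : Measurable X)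
    (hU : ∀ t, Measurable (U t)) (hV : ∀ t, Measurable (V t))
    (hPrior : μ.map W = Measure.pi fun _ : Fin d => bern (1 / 2))
    (hSample : ∀ᵐ w ∂(μ.map W),
      condDistrib X W μ w = Measure.pi fun j : Fin d => bsc ((1 - δ) / 2) (w j))
    (φQ : (Fin d → Bool) → M)
    (φE : (t : ℕ) → M → (Fin t → V') → U')
    (hEnc : ∀ t, t < T → ∀ ω, U t ω = φE t (φQ (X ω)) fun s : Fin t => V s ω)
    (hChannel : ∀ t, t < T →
      ∀ᵐ p ∂(μ.map fun ω => ((W ω, X ω, fun s : Fin t => V s ω), U t ω)),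
        condDistrib (V t) (fun ω => ((W ω, X ω, fun s : Fin t => V s ω), U t ω)) μ p = K p.2)
    (ηT : ℝ)
    (hηT : ηT = 1 - (1 - (etaMax K).toReal) ^ T ∨
      ((∀ t y v v', φE t y v = φE t y v') ∧ ηT = (etaMax (kernelPi T K)).toReal)) :
    mi μ W (fun ω (t : Fin T) => V t ω) ≤
      min ((d : ℝ) * (1 - binEnt ((1 - δ) / 2)) * ηT)
        (min (δ ^ 2 * logb 2 (Fintype.card M) * ηT) (δ ^ 2 * capacity K * T)) := by
  have := Fintype.ofFinite U'
  have := Fintype.ofFinite V'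
  obtain ⟨hη, hsdpi⟩ : 0 ≤ ηT ∧ SDPI (feedbackChannel (kernelMatrix K) φE T) ηT := by
    obtain rfl | ⟨hφE, rfl⟩ := hηT
    · have hη1 := toReal_etaMax_le_one K
      have hη0 : 0 ≤ (etaMax K).toReal := ENNReal.toReal_nonneg
      exact ⟨sub_nonneg.2 (pow_le_one₀ (by linarith) (by linarith)),
        sdpi_feedbackChannel_of_etaMax T K φE⟩
    · exact ⟨ENNReal.toReal_nonneg, sdpi_feedbackChannel_of_etaMax_kernelPi T K hφE⟩
  have hlog : 0 < log 2 := log_pos one_lt_two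
  rw [mi_eq_mutualInfo_mul_feedbackChannel_div (φ := fun t x => φE t (φQ x)) hW hX hU hV
    ((isStochastic_bscMatrix hδ).channelPow d) (massFn_map_prodMk_bsc hδ hX hPrior hSample) hEnc
    hChannel]
  refine le_min ?_ (le_min ?_ ?_) <;> rw [div_le_iff₀ hlog]
  · exact (mutualInfo_bsc_mul_le_of_sdpi hδ hη (hsdpi.submatrix hη φQ)).trans_eq (by ring)
  · refine (mutualInfo_bsc_mul_submatrix_le_of_sdpi hδ hη hsdpi φQ).trans_eq ?_
    rw [logb]
    field_simp
  · exact (mutualInfo_bsc_mul_feedbackChannel_le hδ (isStochastic_kernelMatrix K)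
      (fun _ => mutualInfo_kernelMatrix_le_capacity K) _ T).trans_eq (by ring)

/-- Corollary 5. Estimating a discrete parameter: `W` uniform on
`{-1,1}^d` (modeled as `Bool^d`), the sample `X ∈ {-1,1}^d` is obtained by passing each
coordinate of `W` through `BSC((1-δ)/2)`; the processor quantizes `X` to a `b`-bit message
and sends it over `T` uses of a DMC `K` with capacity `C`. Then for any quantizer/encoder,
`I(W; V^T) ≤ min { d (1 − h₂((1−δ)/2)) η_T, δ² b η_T, δ² C T }`,
with `η_T = 1 − (1 − η(K))^T` (feedback) or `η_T = η(K^{⊗T})` (no feedback). -/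
theorem discrete_param_mi_upper_bound
    {Ω U' V' : Type*} [MeasurableSpace Ω]
    [MeasurableSpace U'] [Fintype U'] [MeasurableSingletonClass U'] [Nonempty U']
    [MeasurableSpace V'] [Fintype V'] [MeasurableSingletonClass V'] [Nonempty V']
    (μ : Measure Ω) [IsProbabilityMeasure μ]
    (K : Kernel U' V') [IsMarkovKernel K]
    (d b T : ℕ) (δ : ℝ) (hδ0 : 0 ≤ δ) (hδ1 : δ ≤ 1)
    (W X : Ω → Fin d → Bool) (U : ℕ → Ω → U') (V : ℕ → Ω → V')
    (hW : Measurable W) (hX : Measurable X)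
    (hU : ∀ t, Measurable (U t)) (hV : ∀ t, Measurable (V t))
    (hPrior : μ.map W = Measure.pi fun _ : Fin d => bern (1 / 2))
    (hSample : ∀ᵐ w ∂(μ.map W),
      condDistrib X W μ w = Measure.pi fun j : Fin d => bsc ((1 - δ) / 2) (w j))
    (φQ : (Fin d → Bool) → Fin (2 ^ b))
    (φE : (t : ℕ) → Fin (2 ^ b) → (Fin t → V') → U')
    (hEnc : ∀ t, t < T → ∀ ω, U t ω = φE t (φQ (X ω)) fun s : Fin t => V s ω)
    (hChannel : ∀ t, t < T →
      ∀ᵐ p ∂(μ.map fun ω => ((W ω, X ω, fun s : Fin t => V s ω), U t ω)),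
        condDistrib (V t) (fun ω => ((W ω, X ω, fun s : Fin t => V s ω), U t ω)) μ p = K p.2)
    (ηT : ℝ)
    (hηT : ηT = 1 - (1 - (etaMax K).toReal) ^ T ∨
      ((∀ t y v v', φE t y v = φE t y v') ∧ ηT = (etaMax (kernelPi T K)).toReal)) :
    mi μ W (fun ω (t : Fin T) => V t ω) ≤
      min ((d : ℝ) * (1 - binEnt ((1 - δ) / 2)) * ηT)
        (min (δ ^ 2 * b * ηT) (δ ^ 2 * capacity K * T)) := by
  have hbits : logb 2 (Fintype.card (Fin (2 ^ b))) = b := by simp [logb_pow]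
  exact hbits ▸ discrete_param_mi_upper_bound_general μ K d T δ (abs_le.2 ⟨by linarith, hδ1⟩)
    W X U V hW hX hU hV hPrior hSample φQ φE hEnc hChannel ηT hηT

end DecEst
end
end
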